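/- Let N ≥ 3 be odd. Let u₁ ∈ C_c^∞(ℝ^N) with supp u₁ ⊆ {|x| ≤ 1}, and let u : ℝ × ℝ^N → ℝ be a smooth solution of the linear wave equation ∂_t²u = Δ_x u with u(0,·) = 0 and ∂_t u(0,·) = u₁. Define Ext(t) = (1/2)∫_{|x| ≥ |t|} (|∇_x u(t,x)|² + (∂_t u(t,x))²) dx. Then Ext(t) → (1/4)∫_{ℝ^N}u₁² dx as t → +∞ and also as t → −∞. -/

import Mathlib

open MeasureTheory Metric Filter Set

noncomputable section

/-- The ground state `W(x) = (1 + |x|²/(N(N-2)))^(-(N-2)/2)`. -/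
def W (N : ℕ) (x : EuclideanSpace ℝ (Fin N)) : ℝ :=
  (1 + ‖x‖ ^ 2 / ((N : ℝ) * ((N : ℝ) - 2))) ^ (-(((N : ℝ) - 2) / 2))

/-- The energy `E(v₀,v₁)`. -/
def energy (N : ℕ) (v₀ v₁ : EuclideanSpace ℝ (Fin N) → ℝ) : ℝ :=
  (1 / 2) * (∫ x, v₁ x ^ 2)
    + (1 / 2) * (∫ x, ‖gradient v₀ x‖ ^ 2)
    - ((N : ℝ) - 2) / (2 * (N : ℝ)) * (∫ x, |v₀ x| ^ (2 * (N : ℝ) / ((N : ℝ) - 2)))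

/-- The first coordinate of a point of `ℝ^N`. -/
def firstCoord {N : ℕ} (x : EuclideanSpace ℝ (Fin N)) : ℝ :=
  if h : 0 < N then x ⟨0, h⟩ else 0

/-- The Lorentz-transformed ground state `W_ℓ(t,x)`; the sum `x₂² + ⋯ + x_N²` is written
as `‖x‖² - x₁²`. -/
def Wl (N : ℕ) (ℓ : ℝ) (t : ℝ) (x : EuclideanSpace ℝ (Fin N)) : ℝ :=
  (1 + (firstCoord x - t * ℓ) ^ 2 / ((N : ℝ) * ((N : ℝ) - 2) * (1 - ℓ ^ 2))
     + (‖x‖ ^ 2 - firstCoord x ^ 2) / ((N : ℝ) * ((N : ℝ) - 2))) ^ (-(((N : ℝ) - 2) / 2))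

/-- The time derivative `∂ₜ W_ℓ(t,x)`. -/
def dtWl (N : ℕ) (ℓ : ℝ) (t : ℝ) (x : EuclideanSpace ℝ (Fin N)) : ℝ :=
  deriv (fun s => Wl N ℓ s x) t

/-- The second partial derivative `∂²f/∂xⱼ²` at `x`. -/
def d2 {N : ℕ} (f : EuclideanSpace ℝ (Fin N) → ℝ) (j : Fin N)
    (x : EuclideanSpace ℝ (Fin N)) : ℝ :=
  fderiv ℝ (fun y => fderiv ℝ f y (EuclideanSpace.single j 1)) x (EuclideanSpace.single j 1)

abbrev Eu (N : ℕ) := EuclideanSpace ℝ (Fin N)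

def ei {N : ℕ} (i : Fin N) : Eu N := EuclideanSpace.single i 1

/-- partial derivative -/
def pd {N : ℕ} (i : Fin N) (f : Eu N → ℝ) (x : Eu N) : ℝ := fderiv ℝ f x (ei i)

def lap {N : ℕ} (f : Eu N → ℝ) (x : Eu N) : ℝ := ∑ i, pd i (pd i f) x

section basics
variable {N : ℕ}

lemma sum_coord_ei (x : Eu N) : x = ∑ i, x i • (ei i : Eu N) := by
  ext j
  simp [ei, Finset.sum_apply, Pi.single_apply]

lemma fderiv_eq_sum_pd (f : Eu N → ℝ) (x z : Eu N) :
    fderiv ℝ f x z = ∑ i, z i * pd i f x := by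
  conv_lhs => rw [sum_coord_ei z]
  simp [pd]

lemma contDiff_pd {f : Eu N → ℝ} (hf : ContDiff ℝ (⊤ : ℕ∞) f) (i : Fin N) :
    ContDiff ℝ (⊤ : ℕ∞) (pd i f) := by
  unfold pd
  have := hf.fderiv_right (m := (⊤ : ℕ∞)) (by simp)
  exact this.clm_apply contDiff_const

lemma contDiff_lap {f : Eu N → ℝ} (hf : ContDiff ℝ (⊤ : ℕ∞) f) :
    ContDiff ℝ (⊤ : ℕ∞) (lap f) := by
  unfold lap
  exact ContDiff.sum fun i _ => contDiff_pd (contDiff_pd hf i) i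

lemma contDiff_lap_iter {f : Eu N → ℝ} (hf : ContDiff ℝ (⊤ : ℕ∞) f) (j : ℕ) :
    ContDiff ℝ (⊤ : ℕ∞) (lap^[j] f) := by
  induction j with
  | zero => simpa using hf
  | succ j ih => rw [Function.iterate_succ_apply']; exact contDiff_lap ih

lemma pd_eq_zero_of_isOpen {f : Eu N → ℝ} {s : Set (Eu N)} (hs : IsOpen s)
    (h : ∀ x ∈ s, f x = 0) (i : Fin N) : ∀ x ∈ s, pd i f x = 0 := by
  intro x hx
  have : f =ᶠ[nhds x] fun _ => 0 := by
    filter_upwards [hs.mem_nhds hx] with y hy using h y hy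
  simp [pd, this.fderiv_eq]

lemma lap_eq_zero_of_isOpen {f : Eu N → ℝ} {s : Set (Eu N)} (hs : IsOpen s)
    (h : ∀ x ∈ s, f x = 0) : ∀ x ∈ s, lap f x = 0 := by
  intro x hx
  exact Finset.sum_eq_zero fun i _ =>
    pd_eq_zero_of_isOpen hs (pd_eq_zero_of_isOpen hs h i) i x hx

lemma lap_iter_eq_zero_of_isOpen {f : Eu N → ℝ} {s : Set (Eu N)} (hs : IsOpen s)
    (h : ∀ x ∈ s, f x = 0) (j : ℕ) : ∀ x ∈ s, lap^[j] f x = 0 := by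
  induction j with
  | zero => simpa using h
  | succ j ih => rw [Function.iterate_succ_apply']; exact lap_eq_zero_of_isOpen hs ih

lemma pd_supp {f : Eu N → ℝ} (h : ∀ x, 1 < ‖x‖ → f x = 0) (i : Fin N) :
    ∀ x, 1 < ‖x‖ → pd i f x = 0 :=
  pd_eq_zero_of_isOpen (s := {x | 1 < ‖x‖}) (isOpen_lt continuous_const continuous_norm) h i

lemma lap_iter_supp {f : Eu N → ℝ} (h : ∀ x, 1 < ‖x‖ → f x = 0) (j : ℕ) :
    ∀ x, 1 < ‖x‖ → lap^[j] f x = 0 :=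
  lap_iter_eq_zero_of_isOpen (s := {x | 1 < ‖x‖}) (isOpen_lt continuous_const continuous_norm) h j

lemma hcs_of_supp {f : Eu N → ℝ} {R : ℝ} (h : ∀ x, R < ‖x‖ → f x = 0) : HasCompactSupport f :=
  HasCompactSupport.intro (isCompact_closedBall (0 : Eu N) R) fun x hx => h x (by simpa using hx)

lemma hcs_pd {f : Eu N → ℝ} (h : HasCompactSupport f) (i : Fin N) : HasCompactSupport (pd i f) :=
  h.fderiv_apply ℝ (ei i)

lemma cont_pd {f : Eu N → ℝ} (hf : ContDiff ℝ 1 f) (i : Fin N) : Continuous (pd i f) :=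
  (hf.continuous_fderiv (by simp)).clm_apply continuous_const

/-- Integration by parts, second function compactly supported. -/
lemma ibp {f g : Eu N → ℝ} (hf : ContDiff ℝ 1 f) (hg : ContDiff ℝ 1 g)
    (hc : HasCompactSupport g) (i : Fin N) :
    ∫ x, f x * pd i g x = - ∫ x, pd i f x * g x := by
  apply integral_mul_fderiv_eq_neg_fderiv_mul_of_integrable
  · exact ((cont_pd hf i).mul hg.continuous).integrable_of_hasCompactSupport hc.mul_left
  · exact (hf.continuous.mul (cont_pd hg i)).integrable_of_hasCompactSupport (hcs_pd hc i).mul_left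
  · exact (hf.continuous.mul hg.continuous).integrable_of_hasCompactSupport hc.mul_left
  · exact fun x _ => hf.differentiable (by simp) x
  · exact fun x _ => hg.differentiable (by simp) x

lemma ibp' {f g : Eu N → ℝ} (hf : ContDiff ℝ 1 f) (hg : ContDiff ℝ 1 g)
    (hc : HasCompactSupport f) (i : Fin N) :
    ∫ x, f x * pd i g x = - ∫ x, pd i f x * g x := by
  have := ibp hg hf hc i
  simp only [mul_comm] at this ⊢
  rw [this]; simp

lemma integrable_mul_cs {f g : Eu N → ℝ} (hf : Continuous f) (hg : Continuous g)
    (hc : HasCompactSupport g) : Integrable (fun x => f x * g x) :=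
  (hf.mul hg).integrable_of_hasCompactSupport hc.mul_left

lemma integrable_mul_cs' {f g : Eu N → ℝ} (hf : Continuous f) (hg : Continuous g)
    (hc : HasCompactSupport f) : Integrable (fun x => f x * g x) :=
  (hf.mul hg).integrable_of_hasCompactSupport hc.mul_right

/-- Green identity. -/
lemma ibp_lap {f g : Eu N → ℝ} (hf : ContDiff ℝ (⊤ : ℕ∞) f) (hg : ContDiff ℝ (⊤ : ℕ∞) g)
    (hc : HasCompactSupport g) :
    ∫ x, f x * lap g x = ∫ x, lap f x * g x := by
  have h1 : ∀ {h : Eu N → ℝ}, ContDiff ℝ (⊤ : ℕ∞) h → ContDiff ℝ 1 h := fun h =>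
    h.of_le (by exact_mod_cast le_top)
  simp only [lap, Finset.mul_sum, Finset.sum_mul]
  rw [integral_finsetSum, integral_finsetSum]
  · refine Finset.sum_congr rfl fun i _ => ?_
    rw [ibp (h1 hf) (h1 (contDiff_pd hg i)) (hcs_pd hc i) i,
      ibp (h1 (contDiff_pd hf i)) (h1 hg) hc i, neg_neg]
  · intro i _
    exact integrable_mul_cs (contDiff_pd (contDiff_pd hf i) i).continuous hg.continuous hc
  · intro i _
    exact integrable_mul_cs hf.continuous (contDiff_pd (contDiff_pd hg i) i).continuous
      (hcs_pd (hcs_pd hc i) i)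

/-- Differentiation under the integral sign. -/
lemma diff_under (F F' : ℝ → Eu N → ℝ) (R : ℝ) (t₀ : ℝ)
    (hF : ∀ t z, HasDerivAt (fun t => F t z) (F' t z) t)
    (hFc : ∀ t, Continuous (F t)) (hF'c : Continuous (fun p : ℝ × Eu N => F' p.1 p.2))
    (h0 : ∀ z, R < ‖z‖ → F t₀ z = 0)
    (h1 : ∀ t z, |t - t₀| ≤ 1 → R < ‖z‖ → F' t z = 0) :
    HasDerivAt (fun t => ∫ z, F t z) (∫ z, F' t₀ z) t₀ := by
  have hK : IsCompact (closedBall t₀ 1 ×ˢ closedBall (0 : Eu N) R) :=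
    (isCompact_closedBall _ _).prod (isCompact_closedBall _ _)
  obtain ⟨C, hC⟩ := hK.exists_bound_of_continuousOn hF'c.continuousOn
  refine (hasDerivAt_integral_of_dominated_loc_of_deriv_le (s := closedBall t₀ 1)
    (bound := (closedBall (0 : Eu N) R).indicator fun _ => C)
    (closedBall_mem_nhds _ one_pos) ?_ ?_ ?_ ?_ ?_ ?_).2
  · exact Eventually.of_forall fun t => (hFc t).aestronglyMeasurable
  · exact (hFc t₀).integrable_of_hasCompactSupport (hcs_of_supp h0)
  · exact (hF'c.comp (by fun_prop : Continuous fun z : Eu N => (t₀, z))).aestronglyMeasurable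
  · refine Eventually.of_forall fun z t ht => ?_
    by_cases hz : z ∈ closedBall (0 : Eu N) R
    · rw [indicator_of_mem hz]
      exact hC (t, z) ⟨ht, hz⟩
    · rw [indicator_of_notMem hz]
      rw [h1 t z (by simpa [Real.dist_eq] using ht) (by simpa using hz)]
      simp
  · rw [integrable_indicator_iff measurableSet_closedBall]
    exact integrableOn_const (isCompact_closedBall _ _).measure_lt_top.ne
  · exact Eventually.of_forall fun z t _ => hF t z

end basics

section kernels
variable {N : ℕ}

lemma one_le_top' : (1 : WithTop ℕ∞) ≤ ((⊤ : ℕ∞) : WithTop ℕ∞) := by exact_mod_cast le_top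

lemma hasDerivAt_max_pow (b : ℕ) (hb : 1 ≤ b) (s : ℝ) :
    HasDerivAt (fun s : ℝ => (max 0 s) ^ (b + 1)) ((b + 1) * (max 0 s) ^ b) s := by
  have key : ∀ y : ℝ, y ≠ 0 →
      HasDerivAt (fun s : ℝ => (max 0 s) ^ (b + 1)) ((b + 1) * (max 0 y) ^ b) y := by
    intro y hy
    rcases lt_or_gt_of_ne hy with h | h
    · have h1 : (fun s : ℝ => (max 0 s) ^ (b + 1)) =ᶠ[nhds y] fun _ => 0 := by
        filter_upwards [gt_mem_nhds h] with z hz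
        simp [max_eq_left hz.le]
      have h2 : ((b : ℝ) + 1) * (max 0 y) ^ b = 0 := by
        rw [max_eq_left h.le, zero_pow (by omega), mul_zero]
      rw [h2]
      exact (hasDerivAt_const y (0 : ℝ)).congr_of_eventuallyEq h1
    · have h1 : (fun s : ℝ => (max 0 s) ^ (b + 1)) =ᶠ[nhds y] fun s => s ^ (b + 1) := by
        filter_upwards [lt_mem_nhds h] with z hz
        rw [max_eq_right (le_of_lt hz)]
      rw [max_eq_right h.le]
      have := (hasDerivAt_pow (b + 1) y)
      simp only [Nat.cast_add, Nat.cast_one, Nat.add_sub_cancel] at this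
      exact this.congr_of_eventuallyEq h1
  by_cases hs : s = 0
  · subst hs
    refine hasDerivAt_of_hasDerivAt_of_ne (g := fun y => ((b : ℝ) + 1) * (max 0 y) ^ b)
      (fun y hy => key y hy) ?_ ?_
    · exact Continuous.continuousAt (by fun_prop)
    · exact Continuous.continuousAt (by fun_prop)
  · exact key s hs

/-- The kernel `(1-|z|²)₊^b / (2^b b!)`. -/
def kr (N : ℕ) (b : ℕ) (z : Eu N) : ℝ :=
  (max 0 (1 - ‖z‖ ^ 2)) ^ b / (2 ^ b * (Nat.factorial b : ℝ))

lemma kr_cont (b : ℕ) : Continuous (kr N b) := by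
  unfold kr; fun_prop

lemma kr_supp (b : ℕ) (hb : 1 ≤ b) (z : Eu N) (hz : 1 ≤ ‖z‖) : kr N b z = 0 := by
  have : 1 - ‖z‖ ^ 2 ≤ 0 := by nlinarith
  simp [kr, max_eq_left this, show b ≠ 0 by omega]

lemma kr_hcs (b : ℕ) (hb : 1 ≤ b) : HasCompactSupport (kr N b) :=
  hcs_of_supp (R := 1) fun z hz => kr_supp b hb z hz.le

lemma kr_hasFDerivAt (b : ℕ) (hb : 1 ≤ b) (z : Eu N) :
    HasFDerivAt (kr N (b + 1)) ((-kr N b z) • innerSL ℝ z) z := by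
  have h1 : HasFDerivAt (fun z : Eu N => 1 - ‖z‖ ^ 2) (-(2 • innerSL ℝ z)) z :=
    ((hasStrictFDerivAt_norm_sq z).hasFDerivAt).const_sub 1
  have h2 := ((hasDerivAt_max_pow b hb (1 - ‖z‖ ^ 2)).comp_hasFDerivAt z h1).mul_const
    ((2 ^ (b + 1) * (Nat.factorial (b + 1) : ℝ))⁻¹)
  have h3 : (fun z => ((fun s : ℝ => (max 0 s) ^ (b + 1)) ∘ fun z : Eu N => 1 - ‖z‖ ^ 2) z *
      (2 ^ (b + 1) * (Nat.factorial (b + 1) : ℝ))⁻¹) = kr N (b + 1) := by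
    ext z; simp [kr, div_eq_mul_inv]
  rw [h3] at h2
  refine h2.congr_fderiv ?_
  ext v
  have hf : (Nat.factorial b : ℝ) ≠ 0 := by positivity
  have hb1 : (b : ℝ) + 1 ≠ 0 := by positivity
  simp only [kr, smul_apply, smul_eq_mul, neg_apply,
    Nat.factorial_succ, Nat.cast_mul, Nat.cast_add, Nat.cast_one, pow_succ, nsmul_eq_mul]
  field_simp
  push_cast
  ring

lemma kr_pd (b : ℕ) (hb : 1 ≤ b) (i : Fin N) (z : Eu N) :
    pd i (kr N (b + 1)) z = - (z i * kr N b z) := by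
  rw [pd, (kr_hasFDerivAt b hb z).fderiv]
  simp [ei, mul_comm, EuclideanSpace.inner_single_right]

lemma kr_contDiff (b : ℕ) (hb : 1 ≤ b) : ContDiff ℝ 1 (kr N (b + 1)) := by
  rw [contDiff_one_iff_fderiv]
  refine ⟨fun z => (kr_hasFDerivAt b hb z).differentiableAt, ?_⟩
  have : fderiv ℝ (kr N (b + 1)) = fun z => (-kr N b z) • innerSL ℝ z := by
    ext1 z; exact (kr_hasFDerivAt b hb z).fderiv
  rw [this]
  exact ((kr_cont b).neg).smul (innerSL ℝ (E := Eu N)).continuous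

lemma kr_sq (b : ℕ) (hb : 1 ≤ b) (z : Eu N) :
    ‖z‖ ^ 2 * kr N b z = kr N b z - 2 * (b + 1) * kr N (b + 1) z := by
  have hf : (Nat.factorial b : ℝ) ≠ 0 := by positivity
  have hb1 : (b : ℝ) + 1 ≠ 0 := by positivity
  have : (1 - ‖z‖ ^ 2) * (max 0 (1 - ‖z‖ ^ 2)) ^ b = (max 0 (1 - ‖z‖ ^ 2)) ^ (b + 1) := by
    rcases le_total (1 - ‖z‖ ^ 2) 0 with h | h
    · rw [max_eq_left h, zero_pow (by omega), zero_pow (by omega), mul_zero]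
    · rw [max_eq_right h]; exact (pow_succ' _ _).symm
  have h2 : kr N b z - ‖z‖ ^ 2 * kr N b z = 2 * (b + 1) * kr N (b + 1) z := by
    simp only [kr]
    rw [← this, Nat.factorial_succ]
    push_cast
    field_simp
    ring
  linarith

/-- Weighted ball means. -/
def Phi (b : ℕ) (g : Eu N → ℝ) (x : Eu N) (r : ℝ) : ℝ := ∫ z, kr N b z * g (x + r • z)

lemma pd_scale {g : Eu N → ℝ} (hg : Differentiable ℝ g) (x : Eu N) (r : ℝ) (i : Fin N) (z : Eu N) :
    pd i (fun z => g (x + r • z)) z = r * pd i g (x + r • z) := by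
  have h : HasFDerivAt (fun z : Eu N => x + r • z) (r • ContinuousLinearMap.id ℝ (Eu N)) z :=
    ((hasFDerivAt_id z).const_smul r).const_add x
  have := (hg (x + r • z)).hasFDerivAt.comp z h
  have h2 : fderiv ℝ (fun z => g (x + r • z)) z = _ := this.fderiv
  rw [pd, h2]
  simp [pd]

lemma contDiff_scale {n : WithTop ℕ∞} {g : Eu N → ℝ} (hg : ContDiff ℝ n g) (x : Eu N) (r : ℝ) :
    ContDiff ℝ n (fun z => g (x + r • z)) := by fun_prop

lemma star (b : ℕ) (hb : 1 ≤ b) {g : Eu N → ℝ} (hg : ContDiff ℝ (⊤ : ℕ∞) g) (x : Eu N) (r : ℝ) :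
    ∫ z, kr N b z * fderiv ℝ g (x + r • z) z = r * Phi (b + 1) (lap g) x r := by
  have hcs := kr_hcs (N := N) (b + 1) (by omega)
  have hci : ∀ i, Continuous fun z : Eu N => pd i g (x + r • z) := fun i =>
    (contDiff_scale (contDiff_pd hg i) x r).continuous
  have hcii : ∀ i, Continuous fun z : Eu N => pd i (pd i g) (x + r • z) := fun i =>
    (contDiff_scale (contDiff_pd (contDiff_pd hg i) i) x r).continuous
  simp only [fderiv_eq_sum_pd, Phi, lap, Finset.mul_sum]
  rw [integral_finsetSum, integral_finsetSum, Finset.mul_sum]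
  · refine Finset.sum_congr rfl fun i _ => ?_
    have := ibp' (kr_contDiff (N := N) b hb)
      ((contDiff_scale (contDiff_pd hg i) x r).of_le one_le_top') hcs i
    simp only [kr_pd b hb, pd_scale ((contDiff_pd hg i).differentiable (by simp)) x r] at this
    rw [← integral_const_mul]
    have e : ∀ z : Eu N, r * (kr N (b + 1) z * pd i (pd i g) (x + r • z))
      = kr N (b + 1) z * (r * pd i (pd i g) (x + r • z)) := fun z => by ring
    simp only [e]
    rw [this, ← integral_neg]
    congr 1; ext z; ring
  · intro i _
    exact integrable_mul_cs' (kr_cont _) (hcii i) hcs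
  · intro i _
    exact integrable_mul_cs' (kr_cont _) (by fun_prop) (kr_hcs b hb)

lemma sum_sq_coord (z : Eu N) : ∑ i, z i * z i = ‖z‖ ^ 2 := by
  rw [EuclideanSpace.real_norm_sq_eq]
  simp [sq]

lemma starstar (b : ℕ) (hb : 1 ≤ b) {g : Eu N → ℝ} (hg : ContDiff ℝ (⊤ : ℕ∞) g) (x : Eu N) (r : ℝ) :
    Phi b g x r = (2 * (b + 1) + N) * Phi (b + 1) g x r + r ^ 2 * Phi (b + 2) (lap g) x r := by
  have h1 := star (b + 1) (by omega) hg x r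
  have hcs := kr_hcs (N := N) (b + 1) (by omega)
  have hgc : Continuous fun z : Eu N => g (x + r • z) := (contDiff_scale hg x r).continuous
  have hci : ∀ i, Continuous fun z : Eu N => pd i g (x + r • z) := fun i =>
    (contDiff_scale (contDiff_pd hg i) x r).continuous
  -- the radial derivative
  have h2 : r * ∫ z, kr N (b + 1) z * fderiv ℝ g (x + r • z) z
      = Phi b g x r - (2 * (b + 1) + N) * Phi (b + 1) g x r := by
    have e0 : ∀ i : Fin N, ∫ z, (kr N (b + 1) z * z i) * (r * pd i g (x + r • z))
        = (∫ z, z i * z i * kr N b z * g (x + r • z)) - Phi (b + 1) g x r := by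
      intro i
      have hp : ContDiff ℝ 1 (fun z : Eu N => z i) := by fun_prop
      have hk : ContDiff ℝ 1 (fun z : Eu N => kr N (b + 1) z * z i) :=
        (kr_contDiff b hb).mul hp
      have := ibp' hk ((contDiff_scale hg x r).of_le one_le_top') hcs.mul_right i
      simp only [pd_scale (hg.differentiable (by simp)) x r] at this
      rw [this]
      have e1 : ∀ z : Eu N, pd i (fun z : Eu N => kr N (b + 1) z * z i) z
          = kr N (b + 1) z - z i * z i * kr N b z := by
        intro z
        have hpi : HasFDerivAt (fun z : Eu N => z i) (EuclideanSpace.proj i : Eu N →L[ℝ] ℝ) z :=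
          (EuclideanSpace.proj i : Eu N →L[ℝ] ℝ).hasFDerivAt
        have hm : fderiv ℝ (fun z : Eu N => kr N (b + 1) z * z i) z = _ :=
          ((kr_hasFDerivAt b hb z).mul hpi).fderiv
        rw [pd, hm]
        simp [ei, EuclideanSpace.inner_single_right]
        ring
      simp only [e1, sub_mul]
      rw [integral_sub, Phi]
      · ring
      · exact integrable_mul_cs' (kr_cont _) hgc hcs
      · exact integrable_mul_cs' (by have := kr_cont (N := N) b; fun_prop) hgc
          (kr_hcs b hb).mul_left
    rw [← integral_const_mul]
    have e2 : ∀ z : Eu N, r * (kr N (b + 1) z * fderiv ℝ g (x + r • z) z)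
        = ∑ i, (kr N (b + 1) z * z i) * (r * pd i g (x + r • z)) := by
      intro z
      rw [fderiv_eq_sum_pd, Finset.mul_sum, Finset.mul_sum]
      exact Finset.sum_congr rfl fun i _ => by ring
    simp only [e2]
    rw [integral_finsetSum, Finset.sum_congr rfl fun i _ => e0 i, Finset.sum_sub_distrib,
      ← integral_finsetSum]
    · simp only [← Finset.sum_mul, sum_sq_coord, kr_sq b hb, sub_mul]
      rw [integral_sub]
      · simp only [mul_assoc, integral_const_mul]
        simp [Phi]
        ring
      · exact integrable_mul_cs' (kr_cont _) hgc (kr_hcs b hb)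
      · exact integrable_mul_cs' (by have := kr_cont (N := N) (b + 1); fun_prop) hgc hcs.mul_left
    · intro i _
      exact integrable_mul_cs' (by have := kr_cont (N := N) b; fun_prop) hgc
          (kr_hcs b hb).mul_left
    · intro i _
      have := kr_cont (N := N) (b + 1)
      have := hci i
      exact integrable_mul_cs' (by fun_prop) (by fun_prop) hcs.mul_right
  rw [h1] at h2
  have : r ^ 2 * Phi (b + 1 + 1) (lap g) x r = r * (r * Phi (b + 1 + 1) (lap g) x r) := by ring
  rw [show b + 2 = b + 1 + 1 from rfl, this, h2]
  ring

end kernels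

section spacetime
variable {N : ℕ}

def dv (v : ℝ × Eu N) (U : ℝ × Eu N → ℝ) (p : ℝ × Eu N) : ℝ := fderiv ℝ U p v

def dT (U : ℝ × Eu N → ℝ) : ℝ × Eu N → ℝ := dv (1, 0) U
def dX (i : Fin N) (U : ℝ × Eu N → ℝ) : ℝ × Eu N → ℝ := dv (0, ei i) U
def lapX (U : ℝ × Eu N → ℝ) (p : ℝ × Eu N) : ℝ := ∑ i, dX i (dX i U) p

lemma contDiff_dv {U : ℝ × Eu N → ℝ} (hU : ContDiff ℝ (⊤ : ℕ∞) U) (v : ℝ × Eu N) :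
    ContDiff ℝ (⊤ : ℕ∞) (dv v U) := by
  unfold dv
  have := hU.fderiv_right (m := (⊤ : ℕ∞)) (by simp)
  exact this.clm_apply contDiff_const

lemma contDiff_lapX {U : ℝ × Eu N → ℝ} (hU : ContDiff ℝ (⊤ : ℕ∞) U) :
    ContDiff ℝ (⊤ : ℕ∞) (lapX U) := by
  unfold lapX
  exact ContDiff.sum fun i _ => contDiff_dv (contDiff_dv hU _) _

lemma contDiff_lapX_iter {U : ℝ × Eu N → ℝ} (hU : ContDiff ℝ (⊤ : ℕ∞) U) (j : ℕ) :
    ContDiff ℝ (⊤ : ℕ∞) (lapX^[j] U) := by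
  induction j with
  | zero => simpa using hU
  | succ j ih => rw [Function.iterate_succ_apply']; exact contDiff_lapX ih

lemma dv_comm {U : ℝ × Eu N → ℝ} (hU : ContDiff ℝ (⊤ : ℕ∞) U) (v w : ℝ × Eu N) :
    dv v (dv w U) = dv w (dv v U) := by
  ext p
  have hd : DifferentiableAt ℝ (fderiv ℝ U) p :=
    (hU.fderiv_right (m := (⊤ : ℕ∞)) (by simp)).differentiable (by simp) p
  have h1 : ∀ v w : ℝ × Eu N, dv v (dv w U) p = fderiv ℝ (fderiv ℝ U) p v w := by
    intro v w
    unfold dv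
    rw [fderiv_clm_apply hd (differentiableAt_const w)]
    simp
  rw [h1, h1]
  have : IsSymmSndFDerivAt ℝ U p := by
    apply hU.contDiffAt.isSymmSndFDerivAt
    simp only [minSmoothness_of_isRCLikeNormedField]
    exact WithTop.coe_le_coe.2 (le_top : (2 : ℕ∞) ≤ ⊤)
  exact this v w

lemma dv_sum {ι : Type*} (s : Finset ι) (f : ι → ℝ × Eu N → ℝ) (v : ℝ × Eu N)
    (hf : ∀ i ∈ s, Differentiable ℝ (f i)) :
    dv v (fun p => ∑ i ∈ s, f i p) = fun p => ∑ i ∈ s, dv v (f i) p := by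
  ext p
  simp only [dv]
  rw [fderiv_fun_sum fun i hi => hf i hi p]
  simp

lemma lapX_dv {U : ℝ × Eu N → ℝ} (hU : ContDiff ℝ (⊤ : ℕ∞) U) (v : ℝ × Eu N) :
    lapX (dv v U) = dv v (lapX U) := by
  have : lapX U = fun p => ∑ i, dX i (dX i U) p := rfl
  rw [this, dv_sum Finset.univ (fun i => dX i (dX i U)) v fun i _ =>
    (contDiff_dv (contDiff_dv hU _) _).differentiable (by simp)]
  ext p
  refine Finset.sum_congr rfl fun i _ => ?_
  unfold dX
  rw [dv_comm hU, dv_comm (contDiff_dv hU _)]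

lemma lapX_iter_dv {U : ℝ × Eu N → ℝ} (hU : ContDiff ℝ (⊤ : ℕ∞) U) (v : ℝ × Eu N) (j : ℕ) :
    lapX^[j] (dv v U) = dv v (lapX^[j] U) := by
  induction j with
  | zero => rfl
  | succ j ih =>
    rw [Function.iterate_succ_apply', ih, Function.iterate_succ_apply',
      lapX_dv (contDiff_lapX_iter hU j)]

lemma dX_slice {U : ℝ × Eu N → ℝ} (hU : Differentiable ℝ U) (i : Fin N) (t : ℝ) :
    (fun y => dX i U (t, y)) = pd i (fun y => U (t, y)) := by
  ext y
  have h1 : HasFDerivAt (fun y : Eu N => (t, y)) (ContinuousLinearMap.inr ℝ ℝ (Eu N)) y :=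
    hasFDerivAt_prodMk_right t y
  have h2 : fderiv ℝ (fun y => U (t, y)) y = _ := ((hU (t, y)).hasFDerivAt.comp y h1).fderiv
  rw [pd, h2]
  simp [dX, dv]

lemma dT_slice {U : ℝ × Eu N → ℝ} (hU : Differentiable ℝ U) (t : ℝ) (y : Eu N) :
    HasDerivAt (fun s => U (s, y)) (dT U (t, y)) t := by
  have h1 : HasDerivAt (fun s : ℝ => (s, y)) ((1 : ℝ), (0 : Eu N)) t :=
    (hasDerivAt_id t).prodMk (hasDerivAt_const t y)
  exact (hU (t, y)).hasFDerivAt.comp_hasDerivAt t h1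

lemma contDiff_slice {U : ℝ × Eu N → ℝ} (hU : ContDiff ℝ (⊤ : ℕ∞) U) (t : ℝ) :
    ContDiff ℝ (⊤ : ℕ∞) (fun y => U (t, y)) :=
  hU.comp (by fun_prop)

lemma lapX_slice {U : ℝ × Eu N → ℝ} (hU : ContDiff ℝ (⊤ : ℕ∞) U) (t : ℝ) :
    (fun y => lapX U (t, y)) = lap (fun y => U (t, y)) := by
  ext y
  refine Finset.sum_congr rfl fun i _ => ?_
  have h1 := congrFun (dX_slice (contDiff_dv hU (0, ei i)|>.differentiable (by simp)) i t) y
  have h2 := dX_slice (hU.differentiable (by simp)) i t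
  unfold dX at h1 h2 ⊢
  rw [h1, h2]

lemma lapX_iter_slice {U : ℝ × Eu N → ℝ} (hU : ContDiff ℝ (⊤ : ℕ∞) U) (t : ℝ) (j : ℕ) :
    (fun y => lapX^[j] U (t, y)) = lap^[j] (fun y => U (t, y)) := by
  induction j with
  | zero => rfl
  | succ j ih =>
    rw [Function.iterate_succ_apply', Function.iterate_succ_apply', ← ih,
      lapX_slice (contDiff_lapX_iter hU j)]

/-- derivative of ball means along `r = t - τ`. -/
lemma path_deriv (b : ℕ) (hb : 1 ≤ b) {U : ℝ × Eu N → ℝ} (hU : ContDiff ℝ (⊤ : ℕ∞) U)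
    (x : Eu N) (t τ : ℝ) :
    HasDerivAt (fun τ => Phi b (fun y => U (τ, y)) x (t - τ))
      (Phi b (fun y => dT U (τ, y)) x (t - τ)
        - (t - τ) * Phi (b + 1) (fun y => lapX U (τ, y)) x (t - τ)) τ := by
  have hcT : Continuous (dT U) := (contDiff_dv hU _).continuous
  have hcf : Continuous (fderiv ℝ U) := hU.continuous_fderiv (by simp)
  have hU' : Differentiable ℝ U := hU.differentiable (by simp)
  have key := diff_under (fun τ z => kr N b z * U (τ, x + (t - τ) • z))
    (fun τ z => kr N b z * fderiv ℝ U (τ, x + (t - τ) • z) (1, -z)) 1 τ ?_ ?_ ?_ ?_ ?_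
  · refine key.congr_deriv ?_
    have e1 : ∀ z, kr N b z * fderiv ℝ U (τ, x + (t - τ) • z) (1, -z)
        = kr N b z * dT U (τ, x + (t - τ) • z)
          - kr N b z * fderiv ℝ (fun y => U (τ, y)) (x + (t - τ) • z) z := by
      intro z
      have h1 : HasFDerivAt (fun y : Eu N => (τ, y)) (ContinuousLinearMap.inr ℝ ℝ (Eu N))
        (x + (t - τ) • z) := hasFDerivAt_prodMk_right τ _
      have h2 : fderiv ℝ (fun y => U (τ, y)) (x + (t - τ) • z) = _ :=
        ((hU' (τ, x + (t - τ) • z)).hasFDerivAt.comp _ h1).fderiv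
      rw [h2, ← mul_sub]
      simp only [dT, dv, ContinuousLinearMap.comp_apply, ContinuousLinearMap.inr_apply,
        ← map_sub]
      simp
    simp only [e1]
    rw [integral_sub, star b hb (contDiff_slice hU τ), ← lapX_slice hU τ]
    · rfl
    · exact integrable_mul_cs' (kr_cont b) (by fun_prop) (kr_hcs b hb)
    · have := (contDiff_slice hU τ).continuous_fderiv (by simp)
      exact integrable_mul_cs' (kr_cont b) (by fun_prop) (kr_hcs b hb)
  · intro s z
    have h1 : HasDerivAt (fun s : ℝ => (s, x + (t - s) • z)) ((1 : ℝ), -z) s := by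
      refine (hasDerivAt_id s).prodMk ?_
      have := (((hasDerivAt_id s).const_sub t).smul_const z).const_add x
      simpa using this
    exact ((hU' _).hasFDerivAt.comp_hasDerivAt s h1).const_mul _
  · intro s
    have := kr_cont (N := N) b
    have := hU.continuous
    fun_prop
  · have := kr_cont (N := N) b
    fun_prop
  · intro z hz
    simp [kr_supp b hb z hz.le]
  · intro s z _ hz
    simp [kr_supp b hb z hz.le]

end spacetime

section scalar
open scoped Nat

def Cc (m j : ℕ) : ℝ := (m.choose j : ℝ) / ((2 * j + 1)‼ : ℝ)

lemma Cc_zero (m : ℕ) : Cc m 0 = 1 := by simp [Cc]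

lemma Cc_last (m : ℕ) : Cc m (m + 1) = 0 := by simp [Cc]

lemma df_succ (j : ℕ) : (((2 * (j + 1) + 1)‼ : ℕ) : ℝ) = (2 * j + 3) * ((2 * j + 1)‼ : ℝ) := by
  rw [show 2 * (j + 1) + 1 = (2 * j + 1) + 2 by ring, Nat.doubleFactorial_add_two]
  push_cast; ring

lemma choose_rel (m j : ℕ) (hj : j ≤ m) :
    (m.choose (j + 1) : ℝ) * (j + 1) = m.choose j * (m - j) := by
  have := Nat.choose_succ_right_eq m j
  have h2 : ((m - j : ℕ) : ℝ) = (m : ℝ) - j := by push_cast [hj]; ring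
  rw [← h2]
  exact_mod_cast this

lemma Cc_rec (m j : ℕ) (hj : j ≤ m) :
    Cc m (j + 1) * ((2 * j + 3) * (2 * j + 2)) = Cc m j * (2 * (m - j)) := by
  have h := choose_rel m j hj
  have h0 : ((2 * j + 1)‼ : ℝ) ≠ 0 := by
    have := Nat.doubleFactorial_pos (2 * j + 1); positivity
  unfold Cc
  rw [df_succ]
  field_simp
  linear_combination h

lemma Cc_pascal (m j : ℕ) (hj : j ≤ m) :
    (2 * (m + 1) + 1) * Cc (m + 1) (j + 1)
      = Cc m (j + 1) * (2 * (m + 1) + 1 + 2 * (j + 1)) + Cc m j := by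
  have h := choose_rel m j hj
  have h0 : ((2 * j + 1)‼ : ℝ) ≠ 0 := by
    have := Nat.doubleFactorial_pos (2 * j + 1); positivity
  unfold Cc
  rw [df_succ, Nat.choose_succ_succ]
  push_cast
  field_simp
  linear_combination (-2) * h

/-- The combination `Σ_j C_j (t^{2j+1} B_j + (2j+1) t^{2j} A_j + t^{2j+2} A_{j+1})`. -/
def Sm (m : ℕ) (t : ℝ) (A B : ℕ → ℝ) : ℝ :=
  ∑ j ∈ Finset.range (m + 1), Cc m j *
    (t ^ (2 * j + 1) * B j + (2 * j + 1) * t ^ (2 * j) * A j + t ^ (2 * j + 2) * A (j + 1))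

lemma scalar_line (m : ℕ) (t : ℝ) (A B : ℕ → ℝ → ℝ)
    (hA : ∀ j τ, HasDerivAt (A j) (B j τ - (t - τ) * A (j + 1) τ) τ)
    (hB : ∀ j τ, HasDerivAt (B j) ((2 * j + 2 * m + 3) * A (j + 1) τ
      + (t - τ) ^ 2 * A (j + 2) τ - (t - τ) * B (j + 1) τ) τ) :
    A 0 t = Sm m t (fun j => A j 0) (fun j => B j 0) := by
  have hρ : ∀ (n : ℕ) τ, HasDerivAt (fun τ : ℝ => (t - τ) ^ n) (-(n * (t - τ) ^ (n - 1))) τ := by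
    intro n τ
    have := ((hasDerivAt_id τ).const_sub t).fun_pow n
    exact this.congr_deriv (by simp)
  have key : ∀ τ, HasDerivAt (fun τ => Sm m (t - τ) (fun j => A j τ) (fun j => B j τ)) 0 τ := by
    intro τ
    unfold Sm
    have h1 : ∀ j ∈ Finset.range (m + 1), HasDerivAt (fun τ => Cc m j *
      ((t - τ) ^ (2 * j + 1) * B j τ + (2 * j + 1) * (t - τ) ^ (2 * j) * A j τ
        + (t - τ) ^ (2 * j + 2) * A (j + 1) τ))
        (Cc m (j + 1) * ((2 * (j + 1 : ℕ) + 1) * (2 * (j + 1 : ℕ))) *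
            (t - τ) ^ (2 * (j + 1) - 1) * A (j + 1) τ
          - Cc m j * ((2 * j + 1) * (2 * j)) * (t - τ) ^ (2 * j - 1) * A j τ) τ := by
      intro j hj
      have hj' : j ≤ m := by simpa [Nat.lt_succ_iff] using hj
      have := ((((hρ (2 * j + 1) τ).mul (hB j τ)).add
        (((hρ (2 * j) τ).const_mul (2 * (j : ℝ) + 1)).mul (hA j τ))).add
        ((hρ (2 * j + 2) τ).mul (hA (j + 1) τ))).const_mul (Cc m j)
      refine this.congr_deriv ?_
      have hr := Cc_rec m j hj'
      have e1 : (2 * (j + 1) - 1 : ℕ) = 2 * j + 1 := by omega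
      have e2 : (2 * j + 1 - 1 : ℕ) = 2 * j := by omega
      have e3 : (2 * j + 2 - 1 : ℕ) = 2 * j + 1 := by omega
      rw [e1, e2, e3]
      push_cast
      have hr' : Cc m (j + 1) * ((2 * (j + 1 : ℝ) + 1) * (2 * (j + 1))) = Cc m j * (2 * (m - j)) := by
        rw [← hr]; ring
      rw [hr']
      ring
    have h2 := HasDerivAt.fun_sum h1
    rw [Finset.sum_range_sub (fun j : ℕ => Cc m j * ((2 * (j : ℝ) + 1) * (2 * j)) *
      (t - τ) ^ (2 * j - 1) * A j τ), Cc_last] at h2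
    simpa using h2
  have hconst := is_const_of_deriv_eq_zero (fun τ => (key τ).differentiableAt)
    (fun τ => (key τ).deriv) t 0
  simp only [sub_self, sub_zero] at hconst
  rw [← hconst]
  unfold Sm
  rw [Finset.sum_range_succ']
  simp [Cc_zero]

end scalar

section repr
variable {N : ℕ}

/-- Representation of smooth solutions of the wave equation in odd dimensions. -/
lemma wave_repr (k : ℕ) (hN : N = 2 * k + 1) {U : ℝ × Eu N → ℝ} (hU : ContDiff ℝ (⊤ : ℕ∞) U)
    (hw : dT (dT U) = lapX U) (t : ℝ) (x : Eu N) :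
    (∫ z, kr N 1 z) * U (t, x) = Sm (k + 1) t
      (fun j => Phi (j + 1) (lap^[j] (fun y => U (0, y))) x t)
      (fun j => Phi (j + 1) (lap^[j] (fun y => dT U (0, y))) x t) := by
  have hTU : ContDiff ℝ (⊤ : ℕ∞) (dT U) := contDiff_dv hU _
  have h := scalar_line (k + 1) t
    (fun j τ => Phi (j + 1) (fun y => lapX^[j] U (τ, y)) x (t - τ))
    (fun j τ => Phi (j + 1) (fun y => lapX^[j] (dT U) (τ, y)) x (t - τ)) ?_ ?_
  · simp only [lapX_iter_slice hU, lapX_iter_slice hTU, sub_zero] at h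
    rw [← h]
    simp [Phi, integral_mul_const]
  · intro j τ
    have := path_deriv (j + 1) (by omega) (contDiff_lapX_iter hU j) x t τ
    refine this.congr_deriv ?_
    rw [← Function.iterate_succ_apply' lapX, dT, ← lapX_iter_dv hU]
    rfl
  · intro j τ
    have := path_deriv (j + 1) (by omega) (contDiff_lapX_iter hTU j) x t τ
    refine this.congr_deriv ?_
    rw [← Function.iterate_succ_apply' lapX]
    have e1 : dT (lapX^[j] (dT U)) = lapX^[j + 1] U := by
      rw [dT, ← lapX_iter_dv hTU, ← dT, hw, Function.iterate_succ_apply]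
    rw [e1, starstar (j + 1) (by omega) (contDiff_slice (contDiff_lapX_iter hU (j + 1)) τ),
      ← lapX_slice (contDiff_lapX_iter hU (j + 1)), ← Function.iterate_succ_apply' lapX]
    have hN' : (N : ℝ) = 2 * k + 1 := by exact_mod_cast hN
    rw [hN']
    push_cast [Nat.succ_eq_add_one]
    ring

end repr

section huygens
variable {N : ℕ}

lemma kr_int_pos : 0 < ∫ z, kr N 1 z := by
  refine (kr_cont 1).integral_pos_of_hasCompactSupport_nonneg_nonzero (kr_hcs 1 le_rfl)
    (x := 0) (fun z => ?_) ?_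
  · unfold kr; positivity
  · simp [kr]

lemma lap_iter_zero (j : ℕ) : lap^[j] (fun _ : Eu N => (0 : ℝ)) = fun _ => 0 := by
  ext x
  exact lap_iter_eq_zero_of_isOpen isOpen_univ (by simp) j x (mem_univ x)

lemma Phi_zero_fun (b : ℕ) (x : Eu N) (t : ℝ) : Phi b (fun _ => (0 : ℝ)) x t = 0 := by
  simp [Phi]

/-- Representation for solutions with zero position data. -/
lemma repr_vel (k : ℕ) (hN : N = 2 * k + 1) {U : ℝ × Eu N → ℝ} (hU : ContDiff ℝ (⊤ : ℕ∞) U)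
    (hw : dT (dT U) = lapX U) (h0 : ∀ x, U (0, x) = 0) (t : ℝ) (x : Eu N) :
    (∫ z, kr N 1 z) * U (t, x) = ∑ j ∈ Finset.range (k + 2), Cc (k + 1) j *
      (t ^ (2 * j + 1) * Phi (j + 1) (lap^[j] (fun y => dT U (0, y))) x t) := by
  rw [wave_repr k hN hU hw]
  simp only [h0, lap_iter_zero, Phi_zero_fun, Sm]
  simp

/-- Representation for solutions with zero velocity data. -/
lemma repr_pos (k : ℕ) (hN : N = 2 * k + 1) {U : ℝ × Eu N → ℝ} (hU : ContDiff ℝ (⊤ : ℕ∞) U)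
    (hw : dT (dT U) = lapX U) (h0 : ∀ x, dT U (0, x) = 0) (t : ℝ) (x : Eu N) :
    (∫ z, kr N 1 z) * U (t, x) = ∑ j ∈ Finset.range (k + 2), Cc (k + 1) j *
      ((2 * j + 1) * t ^ (2 * j) * Phi (j + 1) (lap^[j] (fun y => U (0, y))) x t
        + t ^ (2 * j + 2) * Phi (j + 2) (lap^[j + 1] (fun y => U (0, y))) x t) := by
  rw [wave_repr k hN hU hw]
  simp only [h0, lap_iter_zero, Phi_zero_fun, Sm]
  simp

lemma Phi_far (b : ℕ) (hb : 1 ≤ b) {g : Eu N → ℝ} (hg : ∀ x, 1 < ‖x‖ → g x = 0) (x : Eu N) (t : ℝ)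
    (hx : |t| + 1 < ‖x‖) : Phi b g x t = 0 := by
  have : ∀ z, kr N b z * g (x + t • z) = 0 := by
    intro z
    rcases le_or_gt 1 ‖z‖ with h | h
    · simp [kr_supp b hb z h]
    · rw [hg, mul_zero]
      have h1 : ‖x‖ ≤ ‖x + t • z‖ + ‖t • z‖ := by
        simpa using norm_sub_le (x + t • z) (t • z)
      rw [norm_smul, Real.norm_eq_abs] at h1
      nlinarith [abs_nonneg t, norm_nonneg z]
  simp [Phi, this]

lemma Phi_cv (b : ℕ) (g : Eu N → ℝ) (x : Eu N) (t : ℝ) (ht : 0 < t) :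
    Phi b g x t = (∫ y, (max 0 (t ^ 2 - ‖y - x‖ ^ 2)) ^ b * g y)
      / (t ^ (2 * b + N) * (2 ^ b * (Nat.factorial b : ℝ))) := by
  have h1 : ∀ z : Eu N, kr N b z * g (x + t • z)
      = (fun w : Eu N => (max 0 (t ^ 2 - ‖w‖ ^ 2)) ^ b * g (x + w)
        / (t ^ (2 * b) * (2 ^ b * (Nat.factorial b : ℝ)))) (t • z) := by
    intro z
    have e : t ^ 2 - ‖t • z‖ ^ 2 = t ^ 2 * (1 - ‖z‖ ^ 2) := by
      rw [norm_smul, Real.norm_eq_abs, mul_pow, sq_abs]; ring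
    have e2 : max 0 (t ^ 2 * (1 - ‖z‖ ^ 2)) = t ^ 2 * max 0 (1 - ‖z‖ ^ 2) := by
      rw [mul_max_of_nonneg _ _ (by positivity), mul_zero]
    simp only [e, e2, kr, mul_pow]
    field_simp
    ring
  unfold Phi
  simp_rw [h1]
  have h3 := Measure.integral_comp_smul (volume : Measure (Eu N))
    (fun w : Eu N => (max 0 (t ^ 2 - ‖w‖ ^ 2)) ^ b * g (x + w)
        / (t ^ (2 * b) * (2 ^ b * (Nat.factorial b : ℝ)))) t
  refine h3.trans ?_
  have h2 := integral_sub_right_eq_self (μ := (volume : Measure (Eu N)))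
    (fun w : Eu N => (max 0 (t ^ 2 - ‖w‖ ^ 2)) ^ b * g (x + w)
        / (t ^ (2 * b) * (2 ^ b * (Nat.factorial b : ℝ)))) x
  rw [← h2]
  simp only [add_sub_cancel]
  rw [integral_div]
  rw [finrank_euclideanSpace, Fintype.card_fin, abs_of_pos (by positivity), smul_eq_mul, pow_add]
  field_simp

/-- the polynomial kernels -/
def Qk (t : ℝ) (x : Eu N) (b : ℕ) (y : Eu N) : ℝ :=
  (t ^ 2 - ‖y - x‖ ^ 2) ^ b / (2 ^ b * (Nat.factorial b : ℝ))

lemma Qk_contDiff (t : ℝ) (x : Eu N) (b : ℕ) : ContDiff ℝ (⊤ : ℕ∞) (Qk t x b) := by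
  unfold Qk
  have : ContDiff ℝ (⊤ : ℕ∞) fun y : Eu N => ‖y - x‖ ^ 2 :=
    (contDiff_id.sub contDiff_const).norm_sq ℝ
  exact ((contDiff_const.sub this).pow b).div_const _

lemma Qk_pd (t : ℝ) (x : Eu N) (b : ℕ) (i : Fin N) :
    pd i (Qk t x (b + 1)) = fun y => -((y i - x i) * Qk t x b y) := by
  ext y
  have h0 : HasFDerivAt (fun y : Eu N => ‖y - x‖ ^ 2) (2 • innerSL ℝ (y - x)) y := by
    have := ((hasStrictFDerivAt_norm_sq (y - x)).hasFDerivAt).comp y ((hasFDerivAt_id y).sub_const x)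
    exact this.congr_fderiv (by ext; simp)
  have h1 : HasFDerivAt (fun y : Eu N => t ^ 2 - ‖y - x‖ ^ 2) (-(2 • innerSL ℝ (y - x))) y :=
    h0.const_sub _
  have h2 := ((hasDerivAt_pow (b + 1) (t ^ 2 - ‖y - x‖ ^ 2)).comp_hasFDerivAt y h1).mul_const
    ((2 ^ (b + 1) * (Nat.factorial (b + 1) : ℝ))⁻¹)
  have h3 : fderiv ℝ (Qk t x (b + 1)) y = _ := h2.fderiv
  rw [pd, h3]
  simp [ei, EuclideanSpace.inner_single_right, Qk, Nat.factorial_succ]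
  field_simp
  ring

lemma pd_coord_mul {h : Eu N → ℝ} (hh : Differentiable ℝ h) (x : Eu N) (i : Fin N) (y : Eu N) :
    pd i (fun y => -((y i - x i) * h y)) y = - (h y + (y i - x i) * pd i h y) := by
  have h0 : HasFDerivAt (fun y : Eu N => y i - x i) (EuclideanSpace.proj i : Eu N →L[ℝ] ℝ) y :=
    ((EuclideanSpace.proj i : Eu N →L[ℝ] ℝ).hasFDerivAt).sub_const _
  have h3 : fderiv ℝ (fun y => -((y i - x i) * h y)) y = _ := (h0.mul (hh y).hasFDerivAt).neg.fderiv
  rw [pd, h3]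
  simp [ei, pd]
  ring

lemma Qk_lap_zero (t : ℝ) (x : Eu N) (y : Eu N) : lap (Qk t x 0) y = 0 := by
  have : Qk t x 0 = fun _ : Eu N => (1 : ℝ) := by ext; simp [Qk]
  rw [this]
  have h2 : ∀ i : Fin N, pd i (fun _ : Eu N => (1 : ℝ)) = fun _ => 0 := by
    intro i; ext; simp [pd]
  simp only [lap, h2]
  simp [pd]

lemma Qk_lap_one (t : ℝ) (x : Eu N) (y : Eu N) : lap (Qk t x 1) y = - N := by
  have : Qk t x 0 = fun _ : Eu N => (1 : ℝ) := by ext; simp [Qk]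
  unfold lap
  have h : ∀ i, pd i (pd i (Qk t x 1)) y = -1 := by
    intro i
    rw [Qk_pd t x 0 i, pd_coord_mul ((Qk_contDiff t x 0).differentiable (by simp)), this]
    simp [pd]
  simp [h]

lemma Qk_lap (t : ℝ) (x : Eu N) (b : ℕ) (y : Eu N) :
    lap (Qk t x (b + 2)) y = t ^ 2 * Qk t x b y - (2 * b + 2 + N) * Qk t x (b + 1) y := by
  unfold lap
  have h : ∀ i, pd i (pd i (Qk t x (b + 2))) y
      = - Qk t x (b + 1) y + ((y - x) i * (y - x) i) * Qk t x b y := by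
    intro i
    rw [Qk_pd t x (b + 1) i, pd_coord_mul ((Qk_contDiff t x (b + 1)).differentiable (by simp)),
      Qk_pd]
    simp; ring
  simp only [h, Finset.sum_add_distrib, ← Finset.sum_mul, sum_sq_coord]
  have h2 : (t ^ 2 - ‖y - x‖ ^ 2) * Qk t x b y = 2 * (b + 1) * Qk t x (b + 1) y := by
    simp only [Qk, Nat.factorial_succ]
    push_cast
    field_simp
    ring
  simp
  linear_combination -h2

/-- shifted kernels -/
def Wn (k : ℕ) (t : ℝ) (x : Eu N) (n : ℕ) (y : Eu N) : ℝ := if n < k then 0 else Qk t x (n - k) y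

def Yn (k : ℕ) (t : ℝ) (x : Eu N) (n : ℕ) (g : Eu N → ℝ) : ℝ := ∫ y, Wn k t x n y * g y

lemma Wn_contDiff (k : ℕ) (t : ℝ) (x : Eu N) (n : ℕ) : ContDiff ℝ (⊤ : ℕ∞) (Wn k t x n) := by
  unfold Wn
  split_ifs
  · exact contDiff_const
  · exact Qk_contDiff _ _ _

lemma Wn_lap (k : ℕ) (hN : N = 2 * k + 1) (t : ℝ) (x : Eu N) (n : ℕ) (y : Eu N) :
    lap (Wn k t x (n + 2)) y = t ^ 2 * Wn k t x n y - (2 * n + 3) * Wn k t x (n + 1) y := by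
  have hN' : (N : ℝ) = 2 * k + 1 := by exact_mod_cast hN
  rcases lt_trichotomy (n + 1) k with h | h | h
  · rcases lt_or_eq_of_le (show n + 2 ≤ k by omega) with h2 | h2
    · have : Wn k t x (n + 2) = fun _ => 0 := by ext; simp [Wn, h2]
      rw [this]
      have := congrFun (lap_iter_zero (N := N) 1) y
      simp only [Function.iterate_one] at this
      rw [this]
      simp [Wn, show n < k by omega, h]
    · have : Wn k t x (n + 2) = Qk t x 0 := by ext; simp [Wn, h2]
      rw [this, Qk_lap_zero]
      simp [Wn, show n < k by omega, h]
  · have : Wn k t x (n + 2) = Qk t x 1 := by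
      ext; simp [Wn, show ¬ n + 2 < k by omega, show n + 2 - k = 1 by omega]
    rw [this, Qk_lap_one]
    have e : Qk t x 0 y = 1 := by simp [Qk]
    simp only [Wn, show n < k by omega, show ¬ n + 1 < k by omega, show n + 1 - k = 0 by omega, e,
      if_true, if_false, hN']
    have hk : (k : ℝ) = n + 1 := by rw [← h]; push_cast; ring
    rw [hk]; ring
  · obtain ⟨b, rfl⟩ : ∃ b, n = k + b := ⟨n - k, by omega⟩
    have : Wn k t x (k + b + 2) = Qk t x (b + 2) := by
      ext; simp [Wn, show ¬ k + b + 2 < k by omega, show k + b + 2 - k = b + 2 by omega]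
    rw [this, Qk_lap]
    simp only [Wn, show ¬ k + b < k by omega, show ¬ k + b + 1 < k by omega,
      show k + b + 1 - k = b + 1 by omega, show k + b - k = b by omega,
      if_false, hN']
    push_cast; ring

lemma Yn_rec (k : ℕ) (hN : N = 2 * k + 1) (t : ℝ) (x : Eu N) (n : ℕ) {g : Eu N → ℝ}
    (hg : ContDiff ℝ (⊤ : ℕ∞) g) (hc : HasCompactSupport g) :
    (2 * n + 3) * Yn k t x (n + 1) g + Yn k t x (n + 2) (lap g) = t ^ 2 * Yn k t x n g := by
  unfold Yn
  rw [ibp_lap (Wn_contDiff k t x (n + 2)) hg hc]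
  simp only [Wn_lap k hN]
  have hi : ∀ n, Integrable fun y => Wn k t x n y * g y := fun n =>
    integrable_mul_cs (Wn_contDiff k t x n).continuous hg.continuous hc
  have : ∀ y, (t ^ 2 * Wn k t x n y - (2 * n + 3) * Wn k t x (n + 1) y) * g y
    = t ^ 2 * (Wn k t x n y * g y) - (2 * n + 3) * (Wn k t x (n + 1) y * g y) := fun y => by ring
  simp only [this]
  rw [integral_sub ((hi _).const_mul _) ((hi _).const_mul _), integral_const_mul,
    integral_const_mul]
  ring

lemma pascal_sum (m : ℕ) (a : ℕ → ℝ) :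
    (2 * (m + 1) + 1) * ∑ j ∈ Finset.range (m + 2), Cc (m + 1) j * a j
      = ∑ j ∈ Finset.range (m + 1), Cc m j * ((2 * (m + 1) + 1 + 2 * j) * a j + a (j + 1)) := by
  rw [Finset.sum_range_succ', Cc_zero, mul_add, Finset.mul_sum]
  have h1 : ∀ j ∈ Finset.range (m + 1), (2 * (m + 1 : ℝ) + 1) * (Cc (m + 1) (j + 1) * a (j + 1))
      = Cc m (j + 1) * (2 * (m + 1) + 1 + 2 * ((j + 1 : ℕ) : ℝ)) * a (j + 1)
        + Cc m j * a (j + 1) := by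
    intro j hj
    have := Cc_pascal m j (by simpa [Nat.lt_succ_iff] using hj)
    push_cast
    linear_combination a (j + 1) * this
  rw [Finset.sum_congr rfl h1, Finset.sum_add_distrib]
  have h2 := Finset.sum_range_succ'
    (fun j : ℕ => Cc m j * (2 * (m + 1 : ℝ) + 1 + 2 * (j : ℝ)) * a j) (m + 1)
  rw [Finset.sum_range_succ, Cc_last] at h2
  simp only [mul_add, Finset.sum_add_distrib] at h2 ⊢
  simp [Cc_zero] at h2 ⊢
  simp only [mul_assoc, add_mul, mul_add, one_mul, Finset.sum_add_distrib] at h2 ⊢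
  linarith

lemma huygens_sum (k : ℕ) (hk : 1 ≤ k) (hN : N = 2 * k + 1) (t : ℝ) (x : Eu N) (m : ℕ)
    {g : Eu N → ℝ}
    (hg : ContDiff ℝ (⊤ : ℕ∞) g) (hg1 : ∀ x, 1 < ‖x‖ → g x = 0) :
    ∑ j ∈ Finset.range (m + 1), Cc m j * Yn k t x (m + j) (lap^[j] g) = 0 := by
  induction m with
  | zero => simp [Yn, Wn, show 0 < k by omega]
  | succ m ih =>
    have h := pascal_sum m (fun j => Yn k t x (m + 1 + j) (lap^[j] g))
    have h2 : ∀ j : ℕ, (2 * (m + 1 : ℝ) + 1 + 2 * j) * Yn k t x (m + 1 + j) (lap^[j] g)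
        + Yn k t x (m + 1 + (j + 1)) (lap^[j + 1] g) = t ^ 2 * Yn k t x (m + j) (lap^[j] g) := by
      intro j
      have := Yn_rec k hN t x (m + j) (contDiff_lap_iter hg j) (hcs_of_supp (lap_iter_supp hg1 j))
      rw [← this, Function.iterate_succ_apply', show m + j + 1 = m + 1 + j by ring,
        show m + j + 2 = m + 1 + (j + 1) by ring]
      push_cast; ring
    simp only [h2] at h
    have h3 : ∑ j ∈ Finset.range (m + 1), Cc m j * (t ^ 2 * Yn k t x (m + j) (lap^[j] g))
        = t ^ 2 * ∑ j ∈ Finset.range (m + 1), Cc m j * Yn k t x (m + j) (lap^[j] g) := by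
      rw [Finset.mul_sum]; exact Finset.sum_congr rfl fun j _ => by ring
    rw [h3, ih, mul_zero] at h
    have : (2 * (m + 1 : ℝ) + 1) ≠ 0 := by positivity
    exact (mul_eq_zero.1 h).resolve_left this

lemma Phi_eq_Yn (k : ℕ) (hN : N = 2 * k + 1) {g : Eu N → ℝ} (hg1 : ∀ x, 1 < ‖x‖ → g x = 0)
    (t : ℝ) (ht : 0 < t) (x : Eu N) (hx : ‖x‖ < t - 1) (j : ℕ) :
    t ^ (2 * j + 1) * Phi (j + 1) g x t = Yn k t x (k + 1 + j) g / t ^ (2 * k + 2) := by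
  rw [Phi_cv _ _ _ _ ht]
  have : ∀ y, (max 0 (t ^ 2 - ‖y - x‖ ^ 2)) ^ (j + 1) * g y
      = (t ^ 2 - ‖y - x‖ ^ 2) ^ (j + 1) * g y := by
    intro y
    rcases lt_or_ge 1 ‖y‖ with h | h
    · simp [hg1 y h]
    · rw [max_eq_right]
      have := norm_sub_le y x
      nlinarith [norm_nonneg (y - x)]
  simp only [this, Yn, Wn, show ¬ k + 1 + j < k by omega, if_false,
    show k + 1 + j - k = j + 1 by omega, Qk]
  have e : ∀ y, (t ^ 2 - ‖y - x‖ ^ 2) ^ (j + 1) / (2 ^ (j + 1) * (Nat.factorial (j + 1) : ℝ)) * g y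
    = (t ^ 2 - ‖y - x‖ ^ 2) ^ (j + 1) * g y / (2 ^ (j + 1) * (Nat.factorial (j + 1) : ℝ)) :=
    fun y => by ring
  simp only [e]
  rw [integral_div, show 2 * (j + 1) + N = (2 * j + 1) + (2 * k + 2) by omega, pow_add]
  field_simp
  ring

/-- Strong Huygens principle. -/
lemma huygens (k : ℕ) (hk : 1 ≤ k) (hN : N = 2 * k + 1) {U : ℝ × Eu N → ℝ}
    (hU : ContDiff ℝ (⊤ : ℕ∞) U)
    (hw : dT (dT U) = lapX U) (h0 : ∀ x, U (0, x) = 0)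
    (h1 : ∀ x, 1 < ‖x‖ → dT U (0, x) = 0) (t : ℝ) (x : Eu N) (hx : ‖x‖ < t - 1) :
    U (t, x) = 0 := by
  have ht : 0 < t := by linarith [norm_nonneg x]
  have hg : ContDiff ℝ (⊤ : ℕ∞) (fun y => dT U (0, y)) := contDiff_slice (contDiff_dv hU _) 0
  have h := repr_vel k hN hU hw h0 t x
  have h2 : ∀ j, t ^ (2 * j + 1) * Phi (j + 1) (lap^[j] (fun y => dT U (0, y))) x t
      = Yn k t x (k + 1 + j) (lap^[j] (fun y => dT U (0, y))) / t ^ (2 * k + 2) := fun j =>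
    Phi_eq_Yn k hN (lap_iter_supp h1 j) t ht x hx j
  simp only [h2, ← mul_div_assoc] at h
  rw [← Finset.sum_div, huygens_sum k hk hN t x (k + 1) hg h1, zero_div] at h
  exact (mul_eq_zero.1 h).resolve_left kr_int_pos.ne'

lemma finite_speed (k : ℕ) (hN : N = 2 * k + 1) {U : ℝ × Eu N → ℝ}
    (hU : ContDiff ℝ (⊤ : ℕ∞) U)
    (hw : dT (dT U) = lapX U) (h0 : ∀ x, U (0, x) = 0)
    (h1 : ∀ x, 1 < ‖x‖ → dT U (0, x) = 0) (t : ℝ) (x : Eu N) (hx : |t| + 1 < ‖x‖) :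
    U (t, x) = 0 := by
  have h := repr_vel k hN hU hw h0 t x
  have h2 : ∀ j, Phi (j + 1) (lap^[j] (fun y => dT U (0, y))) x t = 0 := fun j =>
    Phi_far (j + 1) (by omega) (lap_iter_supp h1 j) x t hx
  simp only [h2, mul_zero, Finset.sum_const_zero] at h
  exact (mul_eq_zero.1 h).resolve_left kr_int_pos.ne'

lemma dv_zero {U : ℝ × Eu N → ℝ} {s : Set (ℝ × Eu N)} (hs : IsOpen s) (h : ∀ p ∈ s, U p = 0)
    (v : ℝ × Eu N) : ∀ p ∈ s, dv v U p = 0 := by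
  intro p hp
  have : U =ᶠ[nhds p] fun _ => 0 := by
    filter_upwards [hs.mem_nhds hp] with y hy using h y hy
  simp [dv, this.fderiv_eq]

lemma dv_support (k : ℕ) (hk : 1 ≤ k) (hN : N = 2 * k + 1) {U : ℝ × Eu N → ℝ}
    (hU : ContDiff ℝ (⊤ : ℕ∞) U)
    (hw : dT (dT U) = lapX U) (h0 : ∀ x, U (0, x) = 0)
    (h1 : ∀ x, 1 < ‖x‖ → dT U (0, x) = 0) (v : ℝ × Eu N) :
    (∀ t x, |t| + 1 < ‖x‖ → dv v U (t, x) = 0) ∧ (∀ t x, ‖x‖ < t - 1 → dv v U (t, x) = 0) := by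
  constructor
  · intro t x hx
    refine dv_zero (s := {p | |p.1| + 1 < ‖p.2‖}) (isOpen_lt (by fun_prop) (by fun_prop))
      (fun p hp => finite_speed k hN hU hw h0 h1 p.1 p.2 hp) v _ hx
  · intro t x hx
    refine dv_zero (s := {p | ‖p.2‖ < p.1 - 1}) (isOpen_lt (by fun_prop) (by fun_prop))
      (fun p hp => huygens k hk hN hU hw h0 h1 p.1 p.2 hp) v _ hx

end huygens

section energyc
variable {N : ℕ}

def eD (U : ℝ × Eu N → ℝ) (p : ℝ × Eu N) : ℝ := (∑ i, dX i U p ^ 2) + dT U p ^ 2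

lemma eD_cont {U : ℝ × Eu N → ℝ} (hU : ContDiff ℝ (⊤ : ℕ∞) U) : Continuous (eD U) := by
  have h1 : ∀ i, Continuous (dX i U) := fun i => (contDiff_dv hU _).continuous
  have h2 : Continuous (dT U) := (contDiff_dv hU _).continuous
  unfold eD
  fun_prop

lemma energy_deriv {U : ℝ × Eu N → ℝ}
    (hU : ContDiff ℝ (⊤ : ℕ∞) U) (hw : dT (dT U) = lapX U)
    (hs : ∀ v t x, |t| + 1 < ‖x‖ → dv v U (t, x) = 0) (t₀ : ℝ) :
    HasDerivAt (fun t => ∫ x, eD U (t, x)) 0 t₀ := by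
  have hdX : ∀ i, ContDiff ℝ (⊤ : ℕ∞) (dX i U) := fun i => contDiff_dv hU _
  have hdT : ContDiff ℝ (⊤ : ℕ∞) (dT U) := contDiff_dv hU _
  have hdTX : ∀ i, ContDiff ℝ (⊤ : ℕ∞) (dT (dX i U)) := fun i => contDiff_dv (hdX i) _
  have hdXX : ∀ i, ContDiff ℝ (⊤ : ℕ∞) (dX i (dX i U)) := fun i => contDiff_dv (hdX i) _
  have hdTT : ContDiff ℝ (⊤ : ℕ∞) (dT (dT U)) := contDiff_dv hdT _
  have key := diff_under (fun t x => eD U (t, x))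
    (fun t x => (∑ i, 2 * (dX i U (t, x) * dT (dX i U) (t, x)))
      + 2 * (dT U (t, x) * dT (dT U) (t, x)))
    (|t₀| + 2) t₀ ?_ ?_ ?_ ?_ ?_
  · refine key.congr_deriv ?_
    have hc : ∀ v, HasCompactSupport (fun x => dv v U (t₀, x)) := fun v =>
      hcs_of_supp (R := |t₀| + 1) (fun x hx => hs v t₀ x hx)
    have cX : ∀ i, Continuous (fun x => dX i U (t₀, x)) := fun i =>
      (contDiff_slice (hdX i) t₀).continuous
    have cT : Continuous (fun x => dT U (t₀, x)) := (contDiff_slice hdT t₀).continuous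
    have i1 : ∀ i, Integrable (fun x => dX i U (t₀, x) * dT (dX i U) (t₀, x)) := fun i =>
      integrable_mul_cs' (cX i) (contDiff_slice (hdTX i) t₀).continuous (hc _)
    have i2 : Integrable (fun x => dT U (t₀, x) * dT (dT U) (t₀, x)) :=
      integrable_mul_cs' cT (contDiff_slice hdTT t₀).continuous (hc _)
    have i3 : ∀ i, Integrable (fun x => dX i (dX i U) (t₀, x) * dT U (t₀, x)) := fun i =>
      integrable_mul_cs (contDiff_slice (hdXX i) t₀).continuous cT (hc _)
    rw [integral_add (integrable_finsetSum _ fun i _ => (i1 i).const_mul 2) (i2.const_mul 2),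
      integral_finsetSum _ fun i _ => (i1 i).const_mul 2, integral_const_mul]
    simp only [integral_const_mul]
    have e1 : ∀ i, ∫ x, dX i U (t₀, x) * dT (dX i U) (t₀, x)
        = - ∫ x, dX i (dX i U) (t₀, x) * dT U (t₀, x) := by
      intro i
      have a1 : dT (dX i U) = dX i (dT U) := dv_comm hU _ _
      have a2 := dX_slice (hdT.differentiable (by simp)) i t₀
      have a3 := dX_slice ((hdX i).differentiable (by simp)) i t₀
      have := ibp' (contDiff_slice (hdX i) t₀ |>.of_le one_le_top')
        (contDiff_slice hdT t₀ |>.of_le one_le_top') (hc _) i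
      rw [← a2, ← a3] at this
      rw [a1]
      exact this
    simp only [e1]
    rw [hw]
    have e2 : ∀ x, dT U (t₀, x) * lapX U (t₀, x) = ∑ i, dX i (dX i U) (t₀, x) * dT U (t₀, x) := by
      intro x
      rw [← Finset.sum_mul, mul_comm]; rfl
    simp only [e2]
    rw [integral_finsetSum _ fun i _ => i3 i, Finset.mul_sum, ← Finset.sum_add_distrib]
    apply Finset.sum_eq_zero
    intro i _
    ring
  · intro t x
    have h1 : ∀ i, HasDerivAt (fun s => dX i U (s, x) ^ 2)
        (2 * (dX i U (t, x) * dT (dX i U) (t, x))) t := fun i =>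
      ((dT_slice ((hdX i).differentiable (by simp)) t x).fun_pow 2).congr_deriv (by simp; ring)
    have h2 : HasDerivAt (fun s => dT U (s, x) ^ 2)
        (2 * (dT U (t, x) * dT (dT U) (t, x))) t :=
      ((dT_slice (hdT.differentiable (by simp)) t x).fun_pow 2).congr_deriv (by simp; ring)
    exact (HasDerivAt.fun_sum fun i _ => h1 i).add h2
  · intro t
    exact (eD_cont hU).comp (by fun_prop)
  · have h1 := fun i => (hdX i).continuous
    have h2 := hdT.continuous
    have h3 := fun i => (hdTX i).continuous
    have h4 := hdTT.continuous
    simp only [Prod.mk.eta]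
    fun_prop
  · intro z hz
    have : ∀ v, dv v U (t₀, z) = 0 := fun v => hs v t₀ z (by linarith)
    simp [eD, dX, dT, this]
  · intro t z ht hz
    have : |t| ≤ |t₀| + 1 := by
      have := abs_sub_abs_le_abs_sub t t₀
      linarith
    have h : ∀ v, dv v U (t, z) = 0 := fun v => hs v t z (by linarith)
    have hX : ∀ i, dX i U (t, z) = 0 := fun i => h _
    have hT : dT U (t, z) = 0 := h _
    simp [hX, hT]

lemma energy_const {U : ℝ × Eu N → ℝ}
    (hU : ContDiff ℝ (⊤ : ℕ∞) U) (hw : dT (dT U) = lapX U) (h0 : ∀ x, U (0, x) = 0)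
    (hs : ∀ v t x, |t| + 1 < ‖x‖ → dv v U (t, x) = 0) (t : ℝ) :
    ∫ x, eD U (t, x) = ∫ x, dT U (0, x) ^ 2 := by
  have h := is_const_of_deriv_eq_zero (fun t => (energy_deriv hU hw hs t).differentiableAt)
    (fun t => (energy_deriv hU hw hs t).deriv) t 0
  rw [h]
  congr 1
  ext x
  have : ∀ i, dX i U (0, x) = 0 := by
    intro i
    have := congrFun (dX_slice (hU.differentiable (by simp)) i 0) x
    simp only [h0] at this
    rw [this]; simp [pd]
  simp [eD, this]

end energyc

section asym
variable {N : ℕ}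

/-- `F t s θ` converges to `L s θ` boundedly. -/
def Good (F : ℝ → ℝ → Eu N → ℝ) (L : ℝ → Eu N → ℝ) : Prop :=
  (∃ C, ∀ t s θ, 1 ≤ t → |s| ≤ 1 → ‖θ‖ = 1 → |F t s θ| ≤ C) ∧
  ∀ s θ, |s| ≤ 1 → ‖θ‖ = 1 → Tendsto (fun t => F t s θ) atTop (nhds (L s θ))

lemma Good.add {F G : ℝ → ℝ → Eu N → ℝ} {L M : ℝ → Eu N → ℝ} (h : Good F L) (h' : Good G M) :
    Good (fun t s θ => F t s θ + G t s θ) (fun s θ => L s θ + M s θ) := by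
  obtain ⟨⟨C, hC⟩, h2⟩ := h
  obtain ⟨⟨D, hD⟩, h4⟩ := h'
  refine ⟨⟨C + D, fun t s θ h1 h2 h3 => ?_⟩, fun s θ h1 h3 => (h2 s θ h1 h3).add (h4 s θ h1 h3)⟩
  exact (abs_add_le _ _).trans (add_le_add (hC t s θ h1 h2 h3) (hD t s θ h1 h2 h3))

lemma Good.mul {F G : ℝ → ℝ → Eu N → ℝ} {L M : ℝ → Eu N → ℝ} (h : Good F L) (h' : Good G M) :
    Good (fun t s θ => F t s θ * G t s θ) (fun s θ => L s θ * M s θ) := by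
  obtain ⟨⟨C, hC⟩, h2⟩ := h
  obtain ⟨⟨D, hD⟩, h4⟩ := h'
  refine ⟨⟨C * D, fun t s θ h1 h2 h3 => ?_⟩, fun s θ h1 h3 => (h2 s θ h1 h3).mul (h4 s θ h1 h3)⟩
  rw [abs_mul]
  exact mul_le_mul (hC t s θ h1 h2 h3) (hD t s θ h1 h2 h3) (abs_nonneg _)
    ((abs_nonneg _).trans (hC t s θ h1 h2 h3))

lemma Good.const (c : ℝ) : Good (N := N) (fun _ _ _ => c) (fun _ _ => c) :=
  ⟨⟨|c|, fun _ _ _ _ _ _ => le_rfl⟩, fun _ _ _ _ => tendsto_const_nhds⟩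

lemma Good.congr {F G : ℝ → ℝ → Eu N → ℝ} {L M : ℝ → Eu N → ℝ} (h : Good F L)
    (hFG : ∀ t s θ, 1 ≤ t → |s| ≤ 1 → ‖θ‖ = 1 → G t s θ = F t s θ)
    (hLM : ∀ s θ, M s θ = L s θ) : Good G M := by
  obtain ⟨⟨C, hC⟩, h2⟩ := h
  refine ⟨⟨C, fun t s θ h1 h2 h3 => ?_⟩, fun s θ h1 h3 => ?_⟩
  · rw [hFG t s θ h1 h2 h3]; exact hC t s θ h1 h2 h3
  · rw [hLM]
    refine (h2 s θ h1 h3).congr' ?_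
    filter_upwards [eventually_ge_atTop 1] with t ht
    exact (hFG t s θ ht h1 h3).symm

lemma Good.sum {ι : Type*} (S : Finset ι) {F : ι → ℝ → ℝ → Eu N → ℝ} {L : ι → ℝ → Eu N → ℝ}
    (h : ∀ i ∈ S, Good (F i) (L i)) :
    Good (fun t s θ => ∑ i ∈ S, F i t s θ) (fun s θ => ∑ i ∈ S, L i s θ) := by
  classical
  induction S using Finset.induction_on with
  | empty => simpa using Good.const (N := N) 0
  | insert a S ha ih =>
    simp only [Finset.sum_insert ha]
    exact (h a (Finset.mem_insert_self a S)).add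
      (ih fun i hi => h i (Finset.mem_insert_of_mem hi))

lemma Good.pow_div (j n : ℕ) (hj : j < n) :
    Good (N := N) (fun t _ _ => t ^ j / t ^ n) (fun _ _ => 0) := by
  refine ⟨⟨1, fun t s θ ht _ _ => ?_⟩, fun s θ _ _ => ?_⟩
  · rw [abs_of_nonneg (by positivity)]
    exact div_le_one_of_le₀ (pow_le_pow_right₀ ht hj.le) (by positivity)
  · exact tendsto_pow_div_pow_atTop_zero hj

/-- rescaled means -/
def elt (b : ℕ) (g : Eu N → ℝ) (t s : ℝ) (θ : Eu N) : ℝ :=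
  (∫ y, (max 0 ((t ^ 2 - ‖y - (t + s) • θ‖ ^ 2) / t)) ^ b * g y) / (2 ^ b * (Nat.factorial b : ℝ))

def ell (b : ℕ) (g : Eu N → ℝ) (s : ℝ) (θ : Eu N) : ℝ :=
  (∫ y, (max 0 (2 * (inner ℝ θ y - s))) ^ b * g y) / (2 ^ b * (Nat.factorial b : ℝ))

lemma Phi_elt (b : ℕ) (g : Eu N → ℝ) (t s : ℝ) (ht : 0 < t) (θ : Eu N) :
    Phi b g ((t + s) • θ) t = elt b g t s θ / t ^ (N + b) := by
  rw [Phi_cv _ _ _ _ ht, elt]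
  have : ∀ y, (max 0 (t ^ 2 - ‖y - (t + s) • θ‖ ^ 2)) ^ b * g y
      = t ^ b * ((max 0 ((t ^ 2 - ‖y - (t + s) • θ‖ ^ 2) / t)) ^ b * g y) := by
    intro y
    rw [← mul_assoc, ← mul_pow, mul_max_of_nonneg _ _ ht.le, mul_zero, mul_div_cancel₀ _ ht.ne']
  simp only [this]
  rw [integral_const_mul, show 2 * b + N = N + b + b by ring, pow_add _ (N + b)]
  field_simp

lemma quot_eq (t s : ℝ) (ht : 0 < t) (θ y : Eu N) (hθ : ‖θ‖ = 1) :
    (t ^ 2 - ‖y - (t + s) • θ‖ ^ 2) / t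
      = 2 * (inner ℝ θ y - s) + (2 * s * inner ℝ θ y - ‖y‖ ^ 2 - s ^ 2) / t := by
  rw [norm_sub_sq_real, norm_smul, inner_smul_right, real_inner_comm, hθ, Real.norm_eq_abs, mul_one,
    sq_abs]
  field_simp
  ring

lemma quot_bound (t s : ℝ) (ht : 1 ≤ t) (hs : |s| ≤ 1) (θ y : Eu N) (hθ : ‖θ‖ = 1)
    (hy : ‖y‖ ≤ 1) : max 0 ((t ^ 2 - ‖y - (t + s) • θ‖ ^ 2) / t) ≤ 8 := by
  have hi : |inner ℝ θ y| ≤ 1 := (abs_real_inner_le_norm θ y).trans (by rw [hθ]; simpa using hy)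
  rw [abs_le] at hi hs
  refine max_le (by norm_num) ?_
  rw [quot_eq t s (by linarith) θ y hθ]
  have h1 : 2 * s * inner ℝ θ y - ‖y‖ ^ 2 - s ^ 2 ≤ 2 := by
    nlinarith [sq_nonneg (s - inner ℝ θ y), sq_nonneg ‖y‖, sq_nonneg s]
  have h2 : (2 * s * inner ℝ θ y - ‖y‖ ^ 2 - s ^ 2) / t ≤ 2 := by
    rw [div_le_iff₀ (by linarith)]; linarith
  linarith [hi.2, hs.1]

lemma Good_elt (b : ℕ) {g : Eu N → ℝ} (hgc : Continuous g) (hg : ∀ x, 1 < ‖x‖ → g x = 0) :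
    Good (elt b g) (ell b g) := by
  have hintg : Integrable g := hgc.integrable_of_hasCompactSupport (hcs_of_supp hg)
  have hb : ∀ t s θ y, 1 ≤ t → |s| ≤ 1 → ‖θ‖ = 1 →
      ‖(max 0 ((t ^ 2 - ‖y - (t + s) • θ‖ ^ 2) / t)) ^ b * g y‖ ≤ 8 ^ b * ‖g y‖ := by
    intro t s θ y ht hs hθ
    rcases lt_or_ge 1 ‖y‖ with h | h
    · simp [hg y h]
    · rw [norm_mul]
      refine mul_le_mul_of_nonneg_right ?_ (norm_nonneg _)
      rw [Real.norm_of_nonneg (by positivity)]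
      exact pow_le_pow_left₀ (le_max_left _ _) (quot_bound t s ht hs θ y hθ h) b
  refine ⟨⟨(∫ y, 8 ^ b * ‖g y‖) / (2 ^ b * (Nat.factorial b : ℝ)), fun t s θ ht hs hθ => ?_⟩,
    fun s θ hs hθ => ?_⟩
  · rw [elt, abs_div, abs_of_pos (show (0 : ℝ) < 2 ^ b * (Nat.factorial b : ℝ) by positivity)]
    gcongr
    exact norm_integral_le_of_norm_le (hintg.norm.const_mul _)
      (Eventually.of_forall fun y => hb t s θ y ht hs hθ)
  · unfold elt ell
    refine Tendsto.div_const ?_ _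
    refine tendsto_integral_filter_of_dominated_convergence (fun y => 8 ^ b * ‖g y‖) ?_ ?_
      (hintg.norm.const_mul _) ?_
    · refine Eventually.of_forall fun t => Continuous.aestronglyMeasurable ?_
      fun_prop
    · filter_upwards [eventually_ge_atTop 1] with t ht
      exact Eventually.of_forall fun y => hb t s θ y ht hs hθ
    · refine Eventually.of_forall fun y => ?_
      refine Tendsto.mul_const _ (Tendsto.pow ?_ b)
      refine Tendsto.max tendsto_const_nhds ?_
      have h1 : Tendsto (fun t : ℝ => 2 * (inner ℝ θ y - s)
          + (2 * s * inner ℝ θ y - ‖y‖ ^ 2 - s ^ 2) / t) atTop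
          (nhds (2 * (inner ℝ θ y - s) + 0)) :=
        tendsto_const_nhds.add (tendsto_const_nhds.div_atTop tendsto_id)
      rw [add_zero] at h1
      refine h1.congr' ?_
      filter_upwards [eventually_gt_atTop 0] with t ht
      rw [quot_eq t s ht θ y hθ]

/-- asymptotics for zero-position solutions. -/
lemma Good_vel (k : ℕ) (hN : N = 2 * k + 1) {U : ℝ × Eu N → ℝ} (hU : ContDiff ℝ (⊤ : ℕ∞) U)
    (hw : dT (dT U) = lapX U) (h0 : ∀ x, U (0, x) = 0)
    (h1 : ∀ x, 1 < ‖x‖ → dT U (0, x) = 0) :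
    Good (fun t s θ => t ^ k * U (t, (t + s) • θ))
      (fun s θ => (∫ z, kr N 1 z)⁻¹ * (Cc (k + 1) (k + 1) *
        ell (k + 2) (lap^[k + 1] (fun y => dT U (0, y))) s θ)) := by
  set f : Eu N → ℝ := fun y => dT U (0, y) with hf
  have hfc : ContDiff ℝ (⊤ : ℕ∞) f := contDiff_slice (contDiff_dv hU _) 0
  have hg : ∀ j, Good (elt (j + 1) (lap^[j] f)) (ell (j + 1) (lap^[j] f)) := fun j =>
    Good_elt (j + 1) (contDiff_lap_iter hfc j).continuous (lap_iter_supp h1 j)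
  have h2 : Good (fun t s θ => (∑ j ∈ Finset.range (k + 1), Cc (k + 1) j *
      (t ^ j / t ^ (k + 1) * elt (j + 1) (lap^[j] f) t s θ))
      + Cc (k + 1) (k + 1) * elt (k + 2) (lap^[k + 1] f) t s θ)
      (fun s θ => (∑ j ∈ Finset.range (k + 1), Cc (k + 1) j * (0 * ell (j + 1) (lap^[j] f) s θ))
        + Cc (k + 1) (k + 1) * ell (k + 2) (lap^[k + 1] f) s θ) := by
    refine Good.add (Good.sum _ fun j hj => ?_) ((Good.const _).mul (hg (k + 1)))
    exact (Good.const _).mul ((Good.pow_div j (k + 1) (by simpa using hj)).mul (hg j))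
  refine ((Good.const ((∫ z, kr N 1 z)⁻¹)).mul h2).congr ?_ ?_
  · intro t s θ ht hs hθ
    have ht0 : t ≠ 0 := by linarith
    have hκ : (∫ z, kr N 1 z) ≠ 0 := kr_int_pos.ne'
    have h := repr_vel k hN hU hw h0 t ((t + s) • θ)
    have e : ∀ j, t ^ k * (t ^ (2 * j + 1) * Phi (j + 1) (lap^[j] f) ((t + s) • θ) t)
        = t ^ j / t ^ (k + 1) * elt (j + 1) (lap^[j] f) t s θ := by
      intro j
      rw [Phi_elt _ _ _ _ (by linarith), show N + (j + 1) = k + 1 + (j + 1) + k by omega]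
      simp only [pow_add, pow_mul]
      field_simp
      ring
    rw [eq_inv_mul_iff_mul_eq₀ hκ, mul_left_comm, h, Finset.sum_range_succ, mul_add, Finset.mul_sum]
    congr 1
    · refine Finset.sum_congr rfl fun j _ => ?_
      rw [mul_left_comm, e]
    · rw [mul_left_comm, e, div_self (by positivity), one_mul]
  · intro s θ
    simp

/-- asymptotics for zero-velocity solutions. -/
lemma Good_pos (k : ℕ) (hN : N = 2 * k + 1) {U : ℝ × Eu N → ℝ} (hU : ContDiff ℝ (⊤ : ℕ∞) U)
    (hw : dT (dT U) = lapX U) (h0 : ∀ x, dT U (0, x) = 0)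
    (h1 : ∀ x, 1 < ‖x‖ → U (0, x) = 0) :
    Good (fun t s θ => t ^ k * U (t, (t + s) • θ))
      (fun s θ => (∫ z, kr N 1 z)⁻¹ * (Cc (k + 1) (k + 1) *
        ell (k + 3) (lap^[k + 2] (fun y => U (0, y))) s θ)) := by
  set f : Eu N → ℝ := fun y => U (0, y) with hf
  have hfc : ContDiff ℝ (⊤ : ℕ∞) f := contDiff_slice hU 0
  have hg : ∀ b j, Good (elt b (lap^[j] f)) (ell b (lap^[j] f)) := fun b j =>
    Good_elt b (contDiff_lap_iter hfc j).continuous (lap_iter_supp h1 j)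
  have h2 : Good (fun t s θ => (∑ j ∈ Finset.range (k + 2), Cc (k + 1) j *
      ((2 * j + 1) * (t ^ j / t ^ (k + 2) * elt (j + 1) (lap^[j] f) t s θ)))
      + ((∑ j ∈ Finset.range (k + 1), Cc (k + 1) j *
      (t ^ j / t ^ (k + 1) * elt (j + 2) (lap^[j + 1] f) t s θ))
      + Cc (k + 1) (k + 1) * elt (k + 3) (lap^[k + 2] f) t s θ))
      (fun s θ => (∑ j ∈ Finset.range (k + 2), Cc (k + 1) j *
        ((2 * j + 1) * (0 * ell (j + 1) (lap^[j] f) s θ)))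
        + ((∑ j ∈ Finset.range (k + 1), Cc (k + 1) j * (0 * ell (j + 2) (lap^[j + 1] f) s θ))
        + Cc (k + 1) (k + 1) * ell (k + 3) (lap^[k + 2] f) s θ)) := by
    refine Good.add (Good.sum _ fun j hj => ?_)
      (Good.add (Good.sum _ fun j hj => ?_) ((Good.const _).mul (hg _ _)))
    · exact (Good.const _).mul ((Good.const _).mul
        ((Good.pow_div j (k + 2) (by simpa using hj)).mul (hg _ _)))
    · exact (Good.const _).mul ((Good.pow_div j (k + 1) (by simpa using hj)).mul (hg _ _))
  refine ((Good.const ((∫ z, kr N 1 z)⁻¹)).mul h2).congr ?_ ?_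
  · intro t s θ ht hs hθ
    have ht0 : t ≠ 0 := by linarith
    have hκ : (∫ z, kr N 1 z) ≠ 0 := kr_int_pos.ne'
    have h := repr_pos k hN hU hw h0 t ((t + s) • θ)
    have e1 : ∀ j, t ^ k * (t ^ (2 * j) * Phi (j + 1) (lap^[j] f) ((t + s) • θ) t)
        = t ^ j / t ^ (k + 2) * elt (j + 1) (lap^[j] f) t s θ := by
      intro j
      rw [Phi_elt _ _ _ _ (by linarith), show N + (j + 1) = k + 2 + j + k by omega]
      simp only [pow_add, pow_mul]
      field_simp
      ring
    have e2 : ∀ j, t ^ k * (t ^ (2 * j + 2) * Phi (j + 2) (lap^[j + 1] f) ((t + s) • θ) t)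
        = t ^ j / t ^ (k + 1) * elt (j + 2) (lap^[j + 1] f) t s θ := by
      intro j
      rw [Phi_elt _ _ _ _ (by linarith), show N + (j + 2) = k + 1 + (j + 2) + k by omega]
      simp only [pow_add, pow_mul]
      field_simp
      ring
    have e3 : Cc (k + 1) (k + 1) * elt (k + 3) (lap^[k + 2] f) t s θ
        = Cc (k + 1) (k + 1) * (t ^ (k + 1) / t ^ (k + 1) *
          elt (k + 1 + 2) (lap^[k + 1 + 1] f) t s θ) := by
      rw [div_self (by positivity), one_mul]
    rw [e3, ← Finset.sum_range_succ (fun j => Cc (k + 1) j * (t ^ j / t ^ (k + 1) *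
          elt (j + 2) (lap^[j + 1] f) t s θ)) (k + 1)]
    simp only [← e1, ← e2]
    rw [eq_inv_mul_iff_mul_eq₀ hκ, mul_left_comm, h, ← Finset.sum_add_distrib, Finset.mul_sum]
    refine Finset.sum_congr rfl fun j _ => ?_
    ring
  · intro s θ
    simp

lemma poly_pd (θ : Eu N) (s : ℝ) (b : ℕ) (i : Fin N) :
    pd i (fun y : Eu N => (2 * (inner ℝ θ y - s)) ^ b)
      = fun y => (b * (2 * θ i)) * (2 * (inner ℝ θ y - s)) ^ (b - 1) := by
  ext y
  have h0 : HasFDerivAt (fun y : Eu N => 2 * (inner ℝ θ y - s)) ((2 : ℝ) • innerSL ℝ θ) y :=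
    (((innerSL ℝ θ).hasFDerivAt).sub_const s).const_mul 2
  have h : fderiv ℝ (fun y : Eu N => (2 * (inner ℝ θ y - s)) ^ b) y = _ :=
    ((hasDerivAt_pow b (2 * (inner ℝ θ y - s))).comp_hasFDerivAt y h0).fderiv
  rw [pd, h]
  simp [ei, EuclideanSpace.inner_single_right]
  ring

lemma poly_contDiff (θ : Eu N) (s : ℝ) (b : ℕ) :
    ContDiff ℝ (⊤ : ℕ∞) (fun y : Eu N => (2 * (inner ℝ θ y - s)) ^ b) :=
  (contDiff_const.mul (((innerSL ℝ θ).contDiff).sub contDiff_const)).pow b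

lemma poly_lap (θ : Eu N) (s : ℝ) (b : ℕ) (y : Eu N) :
    lap (fun y : Eu N => (2 * (inner ℝ θ y - s)) ^ b) y
      = (b * ((b - 1 : ℕ) : ℝ) * 4 * ‖θ‖ ^ 2) * (2 * (inner ℝ θ y - s)) ^ (b - 2) := by
  have h : ∀ i, pd i (pd i (fun y : Eu N => (2 * (inner ℝ θ y - s)) ^ b)) y
      = (θ i * θ i) * (b * ((b - 1 : ℕ) : ℝ) * 4 * (2 * (inner ℝ θ y - s)) ^ (b - 2)) := by
    intro i
    rw [poly_pd]
    have hd : Differentiable ℝ (fun y : Eu N => (2 * (inner ℝ θ y - s)) ^ (b - 1)) :=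
      (poly_contDiff θ s (b - 1)).differentiable (by simp)
    have h2 : pd i (fun y : Eu N => (b * (2 * θ i)) * (2 * (inner ℝ θ y - s)) ^ (b - 1)) y
        = (b * (2 * θ i)) * pd i (fun y : Eu N => (2 * (inner ℝ θ y - s)) ^ (b - 1)) y := by
      rw [pd, fderiv_const_mul (hd y)]
      simp [pd]
    rw [h2, poly_pd, Nat.sub_sub]
    ring
  unfold lap
  simp only [h]
  rw [← Finset.sum_mul, sum_sq_coord]
  ring

lemma poly_int (θ : Eu N) (s : ℝ) {g : Eu N → ℝ} (hg : ContDiff ℝ (⊤ : ℕ∞) g)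
    (hg1 : ∀ x, 1 < ‖x‖ → g x = 0) (n : ℕ) : ∀ b, b < 2 * n →
    ∫ y, (2 * (inner ℝ θ y - s)) ^ b * lap^[n] g y = 0 := by
  induction n with
  | zero => intro b hb; omega
  | succ n ih =>
    intro b hb
    rw [Function.iterate_succ_apply', ibp_lap (poly_contDiff θ s b) (contDiff_lap_iter hg n)
      (hcs_of_supp (lap_iter_supp hg1 n))]
    simp only [poly_lap, mul_assoc]
    rw [integral_const_mul]
    rcases Nat.lt_or_ge b 2 with h | h
    · rcases (show b = 0 ∨ b = 1 by omega) with rfl | rfl <;> simp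
    · simp only [integral_const_mul]
      rw [ih (b - 2) (by omega)]
      simp

lemma ell_symm (b n : ℕ) (hb : 1 ≤ b) (hbn : b < 2 * n) {g : Eu N → ℝ}
    (hg : ContDiff ℝ (⊤ : ℕ∞) g) (hg1 : ∀ x, 1 < ‖x‖ → g x = 0) (s : ℝ) (θ : Eu N) :
    ell b (lap^[n] g) (-s) (-θ) ^ 2 = ell b (lap^[n] g) s θ ^ 2 := by
  have h := poly_int θ s hg hg1 n b hbn
  have hgn := (contDiff_lap_iter hg n).continuous
  have hcs := hcs_of_supp (lap_iter_supp hg1 n)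
  have e : ∀ X : ℝ, X ^ b = (max 0 X) ^ b + (-1) ^ b * (max 0 (-X)) ^ b := by
    intro X
    have hb0 : b ≠ 0 := by omega
    rcases le_total 0 X with h | h
    · rw [max_eq_right h, max_eq_left (by linarith : -X ≤ 0)]; simp [hb0]
    · rw [max_eq_left h, max_eq_right (by linarith : 0 ≤ -X), ← mul_pow]; simp [hb0]
  have e2 : ∀ y, (2 * (inner ℝ θ y - s)) ^ b * lap^[n] g y
      = (max 0 (2 * (inner ℝ θ y - s))) ^ b * lap^[n] g y
        + (-1) ^ b * ((max 0 (2 * (inner ℝ (-θ) y - (-s)))) ^ b * lap^[n] g y) := by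
    intro y
    rw [e, inner_neg_left, show 2 * (-inner ℝ θ y - -s) = -(2 * (inner ℝ θ y - s)) by ring]
    ring
  simp only [e2] at h
  rw [integral_add, integral_const_mul] at h
  · unfold ell
    rw [div_pow, div_pow]
    congr 1
    have h1 : ((-1 : ℝ) ^ b) ^ 2 = 1 := by rw [← pow_mul, mul_comm, pow_mul]; simp
    rw [eq_neg_of_add_eq_zero_left h]
    rw [neg_sq, mul_pow, h1, one_mul]
  · exact integrable_mul_cs (by fun_prop) hgn hcs
  · exact (integrable_mul_cs (by fun_prop) hgn hcs).const_mul _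

end asym

section polar
variable {N : ℕ}

/-- Polar coordinates. -/
lemma polar (hN : 1 ≤ N) {h : Eu N → ℝ} (hh : Integrable h) :
    Integrable (fun θ : sphere (0 : Eu N) 1 =>
      ∫ r in Ioi (0 : ℝ), r ^ (N - 1) * h (r • (θ : Eu N))) (volume : Measure (Eu N)).toSphere ∧
    ∫ x, h x = ∫ θ : sphere (0 : Eu N) 1, (∫ r in Ioi (0 : ℝ), r ^ (N - 1) * h (r • (θ : Eu N)))
      ∂(volume : Measure (Eu N)).toSphere := by
  haveI : Nonempty (Fin N) := ⟨⟨0, hN⟩⟩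
  have hmp := (volume : Measure (Eu N)).measurePreserving_homeomorphUnitSphereProd
  rw [finrank_euclideanSpace, Fintype.card_fin] at hmp
  set G : sphere (0 : Eu N) 1 × Ioi (0 : ℝ) → ℝ := fun p => h (p.2.1 • p.1.1) with hG
  have hGc : ∀ x : ({0}ᶜ : Set (Eu N)), G (homeomorphUnitSphereProd (Eu N) x) = h x := by
    intro x
    have hx : ‖(x : Eu N)‖ ≠ 0 := norm_ne_zero_iff.2 x.2
    simp only [hG, homeomorphUnitSphereProd_apply_snd_coe, homeomorphUnitSphereProd_apply_fst_coe]
    rw [smul_smul, mul_inv_cancel₀ hx, one_smul]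
  have hGi : Integrable G ((volume : Measure (Eu N)).toSphere.prod (Measure.volumeIoiPow (N - 1))) := by
    rw [← hmp.integrable_comp_emb (Homeomorph.measurableEmbedding _)]
    have : G ∘ (homeomorphUnitSphereProd (Eu N)) = h ∘ Subtype.val := by
      ext x; exact hGc x
    rw [this, ← integrableOn_iff_comap_subtypeVal (measurableSet_singleton _).compl]
    exact hh.integrableOn
  have hinner : ∀ θ : sphere (0 : Eu N) 1,
      ∫ r, G (θ, r) ∂(Measure.volumeIoiPow (N - 1))
        = ∫ r in Ioi (0 : ℝ), r ^ (N - 1) * h (r • (θ : Eu N)) := by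
    intro θ
    simp only [Measure.volumeIoiPow, ENNReal.ofReal]
    rw [integral_withDensity_eq_integral_smul,
      integral_subtype_comap measurableSet_Ioi
        fun a : ℝ ↦ Real.toNNReal (a ^ (N - 1)) • h (a • (θ : Eu N)),
      setIntegral_congr_fun measurableSet_Ioi fun x hx ↦ ?_]
    · rw [NNReal.smul_def, Real.coe_toNNReal _ (pow_nonneg (le_of_lt hx) _), smul_eq_mul]
    · exact (measurable_subtype_coe.pow_const _).real_toNNReal
  simp only [← hinner]
  refine ⟨hGi.integral_prod_left, ?_⟩
  rw [← integral_prod _ hGi, ← hmp.integral_comp (Homeomorph.measurableEmbedding _)]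
  simp only [hGc]
  rw [integral_subtype_comap (measurableSet_singleton _).compl, restrict_compl_singleton]

lemma annulus_inner (n : ℕ) (q : ℝ → ℝ) (t : ℝ) (ht : 2 ≤ t)
    (hq : ∀ r, 0 < r → (r < t - 1 ∨ t + 1 < r) → q r = 0) :
    ∫ r in Ioi (0 : ℝ), r ^ n * q r = ∫ s in (-1 : ℝ)..1, (t + s) ^ n * q (t + s) := by
  have h1 : ∫ r in Ioi (0 : ℝ), r ^ n * q r = ∫ r in Icc (t - 1) (t + 1), r ^ n * q r := by
    refine setIntegral_eq_of_subset_of_forall_diff_eq_zero measurableSet_Ioi ?_ ?_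
    · intro r hr; have := hr.1; simp only [mem_Ioi]; linarith
    · rintro r ⟨hr, hr'⟩
      rw [hq r hr, mul_zero]
      by_contra hcon
      push Not at hcon
      exact hr' ⟨hcon.1, hcon.2⟩
  rw [h1, integral_Icc_eq_integral_Ioc, ← intervalIntegral.integral_of_le (by linarith),
    intervalIntegral.integral_comp_add_left (fun r => r ^ n * q r) t]
  rfl

def sg (s : ℝ) : ℝ := if 0 ≤ s then 1 else -1

lemma sg_meas : Measurable sg :=
  Measurable.ite measurableSet_Ici measurable_const measurable_const

lemma sg_abs (s : ℝ) : |sg s| = 1 := by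
  unfold sg; split_ifs <;> simp

lemma sg_neg (s : ℝ) (hs : s ≠ 0) : sg (-s) = - sg s := by
  unfold sg
  rcases lt_or_gt_of_ne hs with h | h
  · simp [h.le, not_le.2 h]
  · simp [h.le, not_le.2 h]

lemma final_limit {F : ℝ → ℝ → Eu N → ℝ} {L : ℝ → Eu N → ℝ} (hF : Good F L)
    (hL : ∀ s θ, |s| ≤ 1 → ‖θ‖ = 1 → L (-s) θ = L s θ)
    (hFc : ∀ t θ, Continuous (fun s => F t s θ))
    (hm : ∀ᶠ t in atTop, AEStronglyMeasurable (fun θ : sphere (0 : Eu N) 1 =>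
      ∫ s in (-1 : ℝ)..1, sg s * F t s θ) (volume : Measure (Eu N)).toSphere) :
    Tendsto (fun t => ∫ θ : sphere (0 : Eu N) 1, (∫ s in (-1 : ℝ)..1, sg s * F t s θ)
      ∂(volume : Measure (Eu N)).toSphere) atTop (nhds 0) := by
  obtain ⟨⟨C, hC⟩, hlim⟩ := hF
  have hθ : ∀ θ : sphere (0 : Eu N) 1, ‖(θ : Eu N)‖ = 1 := fun θ => by simp
  have hs : ∀ s ∈ uIoc (-1 : ℝ) 1, |s| ≤ 1 := by
    intro s hs
    rw [uIoc_of_le (by norm_num)] at hs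
    exact abs_le.2 ⟨hs.1.le, hs.2⟩
  have hb : ∀ t s (θ : sphere (0 : Eu N) 1), 1 ≤ t → s ∈ uIoc (-1 : ℝ) 1 →
      ‖sg s * F t s θ‖ ≤ C := by
    intro t s θ ht h
    rw [norm_mul, Real.norm_eq_abs, sg_abs, one_mul]
    exact hC t s θ ht (hs s h) (hθ θ)
  have hinner : ∀ θ : sphere (0 : Eu N) 1,
      Tendsto (fun t => ∫ s in (-1 : ℝ)..1, sg s * F t s θ) atTop (nhds 0) := by
    intro θ
    have h1 : Tendsto (fun t => ∫ s in (-1 : ℝ)..1, sg s * F t s θ) atTop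
        (nhds (∫ s in (-1 : ℝ)..1, sg s * L s θ)) := by
      refine intervalIntegral.tendsto_integral_filter_of_dominated_convergence (fun _ => C) ?_ ?_
        ?_ ?_
      · exact Eventually.of_forall fun t =>
          (sg_meas.aestronglyMeasurable.mul (hFc t θ).aestronglyMeasurable)
      · filter_upwards [eventually_ge_atTop 1] with t ht
        exact Eventually.of_forall fun s h => hb t s θ ht h
      · exact intervalIntegrable_const
      · exact Eventually.of_forall fun s h => (hlim s θ (hs s h) (hθ θ)).const_mul _
    have h2 : ∫ s in (-1 : ℝ)..1, sg s * L s θ = 0 := by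
      have a1 := intervalIntegral.integral_comp_neg (a := -1) (b := 1)
        (fun s => sg s * L s (θ : Eu N))
      simp only [neg_neg] at a1
      have a2 : ∫ s in (-1 : ℝ)..1, sg (-s) * L (-s) θ
          = ∫ s in (-1 : ℝ)..1, - (sg s * L s θ) := by
        refine intervalIntegral.integral_congr_ae ?_
        have : ∀ᵐ s : ℝ, s ≠ 0 := by
          simp [ae_iff]
        filter_upwards [this] with s h0 h
        rw [sg_neg s h0, hL s θ (hs s h) (hθ θ)]
        ring
      rw [a2, intervalIntegral.integral_neg] at a1
      linarith
    rwa [h2] at h1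
  have := tendsto_integral_filter_of_dominated_convergence
    (μ := (volume : Measure (Eu N)).toSphere) (l := atTop)
    (F := fun t (θ : sphere (0 : Eu N) 1) => ∫ s in (-1 : ℝ)..1, sg s * F t s θ)
    (f := fun _ => 0) (fun _ => C * |1 - (-1)|) hm ?_ (integrable_const _)
    (Eventually.of_forall hinner)
  · simpa using this
  · filter_upwards [eventually_ge_atTop 1] with t ht
    refine Eventually.of_forall fun θ => ?_
    exact intervalIntegral.norm_integral_le_of_norm_le_const fun s h => hb t s θ ht h

end polar

section concl
variable {N : ℕ}

lemma dX_wave {U : ℝ × Eu N → ℝ} (hU : ContDiff ℝ (⊤ : ℕ∞) U) (hw : dT (dT U) = lapX U)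
    (v : ℝ × Eu N) : dT (dT (dv v U)) = lapX (dv v U) := by
  rw [lapX_dv hU, ← hw]
  unfold dT
  rw [dv_comm hU, dv_comm (contDiff_dv hU _)]

lemma dX_init {U : ℝ × Eu N → ℝ} (hU : ContDiff ℝ (⊤ : ℕ∞) U) (h0 : ∀ x, U (0, x) = 0)
    (i : Fin N) (x : Eu N) : dX i U (0, x) = 0 := by
  have := congrFun (dX_slice (hU.differentiable (by simp)) i 0) x
  simp only [h0] at this
  rw [this]; simp [pd]

/-- The energy density has a bounded limit along light cones with an antipodal symmetry. -/
lemma Good_eD (k : ℕ) (hk : 1 ≤ k) (hN : N = 2 * k + 1) {U : ℝ × Eu N → ℝ}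
    (hU : ContDiff ℝ (⊤ : ℕ∞) U) (hw : dT (dT U) = lapX U) (h0 : ∀ x, U (0, x) = 0)
    (h1 : ∀ x, 1 < ‖x‖ → dT U (0, x) = 0) :
    ∃ L : ℝ → Eu N → ℝ, Good (fun t s θ => t ^ (2 * k) * eD U (t, (t + s) • θ)) L ∧
      ∀ s θ, L (-s) (-θ) = L s θ := by
  have hX0 : ∀ i x, dX i U (0, x) = 0 := dX_init hU h0
  have hX1 : ∀ i x, 1 < ‖x‖ → dT (dX i U) (0, x) = 0 := by
    intro i x hx
    have e : dT (dX i U) = dX i (dT U) := dv_comm hU _ _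
    have := congrFun (dX_slice ((contDiff_dv hU (1, 0)).differentiable (by simp)) i 0) x
    rw [e]
    refine this.trans ?_
    exact pd_supp h1 i x hx
  have hT0 : ∀ x, dT (dT U) (0, x) = 0 := by
    intro x
    rw [hw]
    have := congrFun (lapX_slice hU 0) x
    simp only [h0] at this
    rw [this]
    simpa using congrFun (lap_iter_zero (N := N) 1) x
  have gX := fun i => Good_vel k hN (contDiff_dv hU (0, ei i)) (dX_wave hU hw _) (hX0 i) (hX1 i)
  have gT := Good_pos k hN (contDiff_dv hU (1, 0)) (dX_wave hU hw _) hT0 h1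
  have g := (Good.sum Finset.univ fun i _ => (gX i).mul (gX i)).add (gT.mul gT)
  refine ⟨_, g.congr ?_ (fun s θ => rfl), ?_⟩
  · intro t s θ _ _ _
    simp only [eD, dX, dT, mul_add, Finset.mul_sum]
    congr 1
    · refine Finset.sum_congr rfl fun i _ => ?_
      ring
    · ring
  · intro s θ
    have e1 := fun i => ell_symm (k + 2) (k + 1) (by omega) (by omega)
      (contDiff_slice (contDiff_dv (contDiff_dv hU (0, ei i)) (1, 0)) 0) (hX1 i) s θ
    have e2 := ell_symm (k + 3) (k + 2) (by omega) (by omega)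
      (contDiff_slice (contDiff_dv hU (1, 0)) 0) h1 s θ
    have c : ∀ a b x y : ℝ, x ^ 2 = y ^ 2 → (a * (b * x)) * (a * (b * x)) = (a * (b * y)) * (a * (b * y)) := by
      intro a b x y h
      linear_combination a ^ 2 * b ^ 2 * h
    congr 1
    · exact Finset.sum_congr rfl fun i _ => c _ _ _ _ (e1 i)
    · exact c _ _ _ _ e2

lemma Good_ratio (n : ℕ) : Good (N := N) (fun t s _ => ((t + s) / t) ^ n) (fun _ _ => 1) := by
  refine ⟨⟨2 ^ n, fun t s θ ht hs _ => ?_⟩, fun s θ hs _ => ?_⟩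
  · rw [abs_le] at hs
    rw [abs_pow]
    refine pow_le_pow_left₀ (abs_nonneg _) ?_ n
    rw [abs_of_nonneg (div_nonneg (by linarith) (by linarith)), div_le_iff₀ (by linarith)]
    linarith
  · have h1 : Tendsto (fun t : ℝ => (1 + s / t) ^ n) atTop (nhds ((1 + 0) ^ n)) :=
      (tendsto_const_nhds.add (tendsto_const_nhds.div_atTop tendsto_id)).pow n
    simp only [add_zero, one_pow] at h1
    refine h1.congr' ?_
    filter_upwards [eventually_gt_atTop 0] with t ht
    rw [add_div, div_self ht.ne']

lemma main_top (k : ℕ) (hk : 1 ≤ k) (hN : N = 2 * k + 1) {U : ℝ × Eu N → ℝ}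
    (hU : ContDiff ℝ (⊤ : ℕ∞) U) (hw : dT (dT U) = lapX U) (h0 : ∀ x, U (0, x) = 0)
    (h1 : ∀ x, 1 < ‖x‖ → dT U (0, x) = 0) :
    Tendsto (fun t : ℝ => ∫ x in {x : Eu N | |t| ≤ ‖x‖}, eD U (t, x)) atTop
      (nhds ((1 / 2) * ∫ x, dT U (0, x) ^ 2)) := by
  have hsupp := fun v => dv_support k hk hN hU hw h0 h1 v
  have hfar : ∀ t x, |t| + 1 < ‖x‖ → eD U (t, x) = 0 := by
    intro t x hx
    have : ∀ v, dv v U (t, x) = 0 := fun v => (hsupp v).1 t x hx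
    simp [eD, dX, dT, this]
  have hnear : ∀ t x, ‖x‖ < t - 1 → eD U (t, x) = 0 := by
    intro t x hx
    have : ∀ v, dv v U (t, x) = 0 := fun v => (hsupp v).2 t x hx
    simp [eD, dX, dT, this]
  have hc : ∀ t, Continuous (fun x => eD U (t, x)) := fun t => (eD_cont hU).comp (by fun_prop)
  have hintg : ∀ t, Integrable (fun x => eD U (t, x)) := fun t =>
    (hc t).integrable_of_hasCompactSupport (hcs_of_supp (hfar t))
  have hE := energy_const hU hw h0 (fun v => (hsupp v).1)
  obtain ⟨L, hL, hLs⟩ := Good_eD k hk hN hU hw h0 h1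
  -- antipodal version
  have hL' : Good (fun t s θ => t ^ (2 * k) * eD U (t, (t + s) • (-θ))) (fun s θ => L s (-θ)) := by
    obtain ⟨⟨C, hC⟩, h2⟩ := hL
    exact ⟨⟨C, fun t s θ ht hs hθ => hC t s (-θ) ht hs (by simpa using hθ)⟩,
      fun s θ hs hθ => h2 s (-θ) hs (by simpa using hθ)⟩
  set F : ℝ → ℝ → Eu N → ℝ := fun t s θ =>
    (t + s) ^ (2 * k) * (eD U (t, (t + s) • θ) + eD U (t, -((t + s) • θ))) with hFdef
  have hF : Good F (fun s θ => 1 * (L s θ + L s (-θ))) := by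
    refine ((Good_ratio (2 * k)).mul (hL.add hL')).congr ?_ (fun _ _ => rfl)
    intro t s θ ht _ _
    have ht0 : t ≠ 0 := by linarith
    simp only [hFdef, smul_neg, div_pow]
    field_simp
  set H : ℝ → Eu N → ℝ := fun t x => sg (‖x‖ - t) * (eD U (t, x) + eD U (t, -x)) with hH
  have hsgm : ∀ t, Measurable (fun x : Eu N => sg (‖x‖ - t)) := fun t =>
    sg_meas.comp (by fun_prop)
  have hsint : ∀ t, ∀ g : Eu N → ℝ, Integrable g → Integrable (fun x => sg (‖x‖ - t) * g x) := by
    intro t g hg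
    exact hg.bdd_mul (hsgm t).aestronglyMeasurable
      (Eventually.of_forall fun x => (by rw [Real.norm_eq_abs, sg_abs] : ‖sg (‖x‖ - t)‖ ≤ 1))
  have hHi : ∀ t, Integrable (H t) := fun t => hsint t _ ((hintg t).add (hintg t).comp_neg)
  have hJ : ∀ t, 2 ≤ t → ∀ θ : sphere (0 : Eu N) 1,
      ∫ r in Ioi (0 : ℝ), r ^ (N - 1) * H t (r • (θ : Eu N))
        = ∫ s in (-1 : ℝ)..1, sg s * F t s θ := by
    intro t ht θ
    have hθ : ‖(θ : Eu N)‖ = 1 := by simp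
    rw [annulus_inner (N - 1) (fun r => H t (r • (θ : Eu N))) t ht]
    · refine intervalIntegral.integral_congr fun s hs => ?_
      rw [uIcc_of_le (by norm_num)] at hs
      have : ‖(t + s) • (θ : Eu N)‖ = t + s := by
        rw [norm_smul, hθ, mul_one, Real.norm_of_nonneg (by linarith [hs.1])]
      simp only [hH, hFdef, this, add_sub_cancel_left, show N - 1 = 2 * k by omega]
      ring
    · intro r hr hr'
      have hn : ‖r • (θ : Eu N)‖ = r := by rw [norm_smul, hθ, mul_one, Real.norm_of_nonneg hr.le]
      have : eD U (t, r • (θ : Eu N)) = 0 ∧ eD U (t, -(r • (θ : Eu N))) = 0 := by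
        rcases hr' with h | h
        · exact ⟨hnear _ _ (by rw [hn]; exact h), hnear _ _ (by rw [norm_neg, hn]; exact h)⟩
        · have : |t| + 1 < r := by rw [abs_of_pos (by linarith)]; exact h
          exact ⟨hfar _ _ (by rw [hn]; exact this), hfar _ _ (by rw [norm_neg, hn]; exact this)⟩
      simp [hH, this.1, this.2]
  have hD : Tendsto (fun t => ∫ x, H t x) atTop (nhds 0) := by
    have := final_limit hF (fun s θ _ _ => ?_) ?_ ?_
    · refine this.congr' ?_
      filter_upwards [eventually_ge_atTop 2] with t ht
      rw [(polar (by omega) (hHi t)).2]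
      simp only [hJ t ht]
    · have a1 := hLs s θ
      have a2 := hLs s (-θ)
      rw [neg_neg] at a2
      simp only [one_mul]
      rw [a1, a2, add_comm]
    · intro t θ
      have := eD_cont hU
      simp only [hFdef]
      fun_prop
    · filter_upwards [eventually_ge_atTop 2] with t ht
      have := (polar (by omega) (hHi t)).1.aestronglyMeasurable
      simpa only [hJ t ht] using this
  have hfinal : Tendsto (fun t : ℝ => (1 / 2) * (∫ x, dT U (0, x) ^ 2) + (1 / 4) * ∫ x, H t x) atTop
      (nhds ((1 / 2) * (∫ x, dT U (0, x) ^ 2) + (1 / 4) * 0)) :=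
    tendsto_const_nhds.add (hD.const_mul _)
  rw [mul_zero, add_zero] at hfinal
  refine hfinal.congr' ?_
  filter_upwards [eventually_ge_atTop 0] with t ht
  have hms : MeasurableSet {x : Eu N | |t| ≤ ‖x‖} := measurableSet_le measurable_const (by fun_prop)
  have i1 := hsint t _ (hintg t)
  have i2 := hsint t _ (hintg t).comp_neg
  have b1 : ∫ x, H t x = 2 * ∫ x, sg (‖x‖ - t) * eD U (t, x) := by
    simp only [hH, mul_add]
    rw [integral_add i1 i2]
    have := integral_neg_eq_self (fun x : Eu N => sg (‖x‖ - t) * eD U (t, x)) volume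
    simp only [norm_neg] at this
    rw [this]; ring
  have b2 : ∫ x in {x : Eu N | |t| ≤ ‖x‖}, eD U (t, x)
      = ∫ x, ((1 / 2) * eD U (t, x) + (1 / 2) * (sg (‖x‖ - t) * eD U (t, x))) := by
    rw [← integral_indicator hms]
    congr 1
    ext x
    simp only [indicator, mem_setOf_eq, sg, sub_nonneg, abs_of_nonneg ht]
    split_ifs <;> ring
  rw [b2, integral_add ((hintg t).const_mul _) (i1.const_mul _), integral_const_mul,
    integral_const_mul, hE t, b1]
  ring

end concl

section fin
variable {N : ℕ}

lemma norm_gradient_sq (f : Eu N → ℝ) (x : Eu N) : ‖gradient f x‖ ^ 2 = ∑ i, pd i f x ^ 2 := by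
  rw [EuclideanSpace.real_norm_sq_eq]
  refine Finset.sum_congr rfl fun i _ => ?_
  have h : inner ℝ (gradient f x) (ei i : Eu N) = pd i f x := by
    unfold gradient pd
    exact InnerProductSpace.toDual_symm_apply
  have h2 : inner ℝ (gradient f x) (ei i : Eu N) = gradient f x i := by
    unfold ei
    rw [EuclideanSpace.inner_single_right]
    simp
  rw [← h, h2]

lemma stmt_top (hN : 3 ≤ N) (hodd : Odd N)
    (u₁ : Eu N → ℝ) (hu₁s : Function.support u₁ ⊆ Metric.closedBall 0 1)
    (u : ℝ → Eu N → ℝ)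
    (hu : ContDiff ℝ (⊤ : ℕ∞) (fun p : ℝ × Eu N => u p.1 p.2))
    (hwave : ∀ t x, deriv (fun s => deriv (fun r => u r x) s) t = ∑ j, d2 (u t) j x)
    (hinit0 : ∀ x, u 0 x = 0)
    (hinit1 : ∀ x, deriv (fun s => u s x) 0 = u₁ x) :
    Tendsto (fun t : ℝ =>
        (1 / 2) * ∫ x in {x : Eu N | |t| ≤ ‖x‖},
          (‖gradient (u t) x‖ ^ 2 + (deriv (fun s => u s x) t) ^ 2))
      atTop (nhds ((1 / 4) * ∫ x, u₁ x ^ 2)) := by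
  obtain ⟨k, hk⟩ := hodd
  set U : ℝ × Eu N → ℝ := fun p => u p.1 p.2 with hUdef
  have hUd : Differentiable ℝ U := hu.differentiable (by simp)
  have hT : ∀ t x, dT U (t, x) = deriv (fun s => u s x) t := fun t x =>
    ((dT_slice hUd t x).deriv).symm
  have hX : ∀ i t x, dX i U (t, x) = pd i (u t) x := fun i t x =>
    congrFun (dX_slice hUd i t) x
  have hw : dT (dT U) = lapX U := by
    ext ⟨t, x⟩
    have a1 := (dT_slice ((contDiff_dv hu (1, 0)).differentiable (by simp)) t x).deriv
    have a2 := congrFun (lapX_slice hu t) x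
    refine a1.symm.trans (Eq.trans ?_ a2.symm)
    have e : (fun s => dv (1, 0) U (s, x)) = fun s => deriv (fun r => u r x) s :=
      funext fun s => hT s x
    refine (congrArg (fun f => deriv f t) e).trans ((hwave t x).trans ?_)
    rfl
  have h1 : ∀ x, 1 < ‖x‖ → dT U (0, x) = 0 := by
    intro x hx
    rw [hT, hinit1]
    by_contra h
    have := hu₁s h
    rw [mem_closedBall_zero_iff] at this
    linarith
  have key := (main_top k (by omega) hk hu hw hinit0 h1).const_mul (1 / 2)
  simp only [hT, hinit1] at key
  have e : (1 / 4 : ℝ) * ∫ x, u₁ x ^ 2 = 1 / 2 * (1 / 2 * ∫ x, u₁ x ^ 2) := by ring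
  rw [e]
  refine key.congr fun t => ?_
  congr 2
  ext x
  simp only [eD, hX, hT, norm_gradient_sq]

end fin

/-- Lemma 2.8, second identity: for data `(0, u₁)` supported in the unit ball, the
exterior energy converges to one quarter of `∫u₁²` at `±∞`. -/
theorem stmt13 (N : ℕ) (hN : 3 ≤ N) (hodd : Odd N)
    (u₁ : EuclideanSpace ℝ (Fin N) → ℝ)
    (hu₁ : ContDiff ℝ (⊤ : ℕ∞) u₁) (hu₁c : HasCompactSupport u₁)
    (hu₁s : Function.support u₁ ⊆ Metric.closedBall 0 1)
    (u : ℝ → EuclideanSpace ℝ (Fin N) → ℝ)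
    (hu : ContDiff ℝ (⊤ : ℕ∞) (fun p : ℝ × EuclideanSpace ℝ (Fin N) => u p.1 p.2))
    (hwave : ∀ t x, deriv (fun s => deriv (fun r => u r x) s) t = ∑ j, d2 (u t) j x)
    (hinit0 : ∀ x, u 0 x = 0)
    (hinit1 : ∀ x, deriv (fun s => u s x) 0 = u₁ x) :
    Tendsto (fun t : ℝ =>
        (1 / 2) * ∫ x in {x : EuclideanSpace ℝ (Fin N) | |t| ≤ ‖x‖},
          (‖gradient (u t) x‖ ^ 2 + (deriv (fun s => u s x) t) ^ 2))
      atTop (nhds ((1 / 4) * ∫ x, u₁ x ^ 2))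
    ∧ Tendsto (fun t : ℝ =>
        (1 / 2) * ∫ x in {x : EuclideanSpace ℝ (Fin N) | |t| ≤ ‖x‖},
          (‖gradient (u t) x‖ ^ 2 + (deriv (fun s => u s x) t) ^ 2))
      atBot (nhds ((1 / 4) * ∫ x, u₁ x ^ 2)) := by
  refine ⟨stmt_top hN hodd u₁ hu₁s u hu hwave hinit0 hinit1, ?_⟩
  have hd : ∀ t x, deriv (fun s => - u (-s) x) t = deriv (fun s => u s x) (-t) := by
    intro t x
    rw [deriv.fun_neg, deriv_comp_neg (fun s => u s x) t, neg_neg]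
  have hp : ∀ i t x, pd i (fun y => - u t y) x = - pd i (u t) x := by
    intro i t x
    unfold pd
    rw [fderiv_fun_neg]; rfl
  have key := stmt_top hN hodd u₁ hu₁s (fun t x => - u (-t) x) ?_ ?_ ?_ ?_
  · have k2 := key.comp tendsto_neg_atBot_atTop
    refine k2.congr fun t => ?_
    simp only [Function.comp, hd, norm_gradient_sq, hp, neg_neg, abs_neg, neg_sq]
  · exact (hu.comp (contDiff_fst.neg.prodMk contDiff_snd)).neg
  · intro t x
    simp only [hd]
    rw [deriv_comp_neg (fun s => deriv (fun r => u r x) s) t, hwave, ← Finset.sum_neg_distrib]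
    refine Finset.sum_congr rfl fun j _ => ?_
    change _ = pd j (pd j (fun y => - u (-t) y)) x
    rw [show pd j (fun y => - u (-t) y) = fun y => - pd j (u (-t)) y from funext (hp j (-t))]
    unfold pd
    rw [fderiv_fun_neg]; rfl
  · intro x; simp [hinit0]
  · intro x; rw [hd, neg_zero, hinit1]

end
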